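/- Let C_n be a vertex-weighted oriented n-cycle with all weights at least 2. Then for every t ≥ 1: reg(I(C_n)^t) = reg(I(C_n)) + (t−1)(w+1), where w = max{w(x) : x ∈ V(C_n)}. -/

import Mathlib

open MvPolynomial

noncomputable section

namespace PaperReg

variable (k : Type) [Field k] (σ : Type)

/-- A graded free resolution of a homogeneous ideal `I` of `MvPolynomial σ k`:
finite-rank free modules `Fin (rk i) →₀ S` with basis elements of degrees `deg i`,
degree-preserving differentials, exact, augmented onto `I`. -/
structure GradedFreeRes (I : Ideal (MvPolynomial σ k)) where
  rk : ℕ → ℕ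
  deg : (i : ℕ) → Fin (rk i) → ℕ
  aug : (Fin (rk 0) →₀ MvPolynomial σ k) →ₗ[MvPolynomial σ k] MvPolynomial σ k
  d : (i : ℕ) →
    ((Fin (rk (i + 1)) →₀ MvPolynomial σ k) →ₗ[MvPolynomial σ k] (Fin (rk i) →₀ MvPolynomial σ k))
  aug_range : LinearMap.range aug = I
  exact_zero : LinearMap.range (d 0) = LinearMap.ker aug
  exact_succ : ∀ i, LinearMap.range (d (i + 1)) = LinearMap.ker (d i)
  aug_graded : ∀ b, (aug (Finsupp.single b 1)).IsHomogeneous (deg 0 b)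
  d_graded : ∀ i b c, (d i (Finsupp.single b 1)) c = 0 ∨
    ∃ m, deg (i + 1) b = deg i c + m ∧ ((d i (Finsupp.single b 1)) c).IsHomogeneous m

/-- The `(i,j)`-th graded Betti number of `I`: the minimal number of degree-`j` basis
elements in homological position `i`, over all graded free resolutions of `I`
(achieved by the minimal graded free resolution). -/
def betti (I : Ideal (MvPolynomial σ k)) (i j : ℕ) : ℕ :=
  sInf { r | ∃ F : GradedFreeRes k σ I,
    r = (Finset.univ.filter (fun b => F.deg i b = j)).card }

/-- Castelnuovo–Mumford regularity: `reg I = max { j - i | betti I i j ≠ 0 }`. -/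
def reg (I : Ideal (MvPolynomial σ k)) : ℕ :=
  sSup { r | ∃ i j : ℕ, betti k σ I i j ≠ 0 ∧ r = j - i }

/-- The monic monomial with exponent vector `a`. -/
def mon (a : σ →₀ ℕ) : MvPolynomial σ k := monomial a 1

/-- `I` is a monomial ideal. -/
def IsMonomialIdeal (I : Ideal (MvPolynomial σ k)) : Prop :=
  ∃ A : Set (σ →₀ ℕ), I = Ideal.span (mon k σ '' A)

/-- The exponent vectors of the unique minimal set of monomial generators of a
monomial ideal: monomials of `I` minimal with respect to divisibility. -/
def minGens (I : Ideal (MvPolynomial σ k)) : Set (σ →₀ ℕ) :=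
  { a | mon k σ a ∈ I ∧ ∀ b : σ →₀ ℕ, mon k σ b ∈ I → b ≤ a → b = a }

/-- The support of a monomial ideal: variables appearing in its minimal generators. -/
def isupp (I : Ideal (MvPolynomial σ k)) : Set σ :=
  ⋃ a ∈ minGens k σ I, ↑a.support

variable (n : ℕ) [NeZero n]

/-- The exponent vector of the `i`-th generator `L_i = x_{i-1} x_i ^ (w i)` of the
edge ideal of the vertex-weighted oriented `n`-cycle (indices mod `n`). -/
def cycE (w : Fin n → ℕ) (i : Fin n) : Fin n →₀ ℕ :=
  Finsupp.single (i - 1) 1 + Finsupp.single i (w i)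

/-- The generator `L_i = x_{i-1} x_i ^ (w i)`. -/
def cycL (w : Fin n → ℕ) (i : Fin n) : MvPolynomial (Fin n) k :=
  monomial (cycE n w i) (1 : k)

/-- The edge ideal of the vertex-weighted oriented `n`-cycle with weights `w`. -/
def cycIdeal (w : Fin n → ℕ) : Ideal (MvPolynomial (Fin n) k) :=
  Ideal.span (Set.range (cycL k n w))


section Graded

variable {k : Type} [Field k] {σ : Type}

/-- The degree `e` piece of the graded free module with basis degrees `deg`. -/
def Fpc {ι : Type} (deg : ι → ℕ) (e : ℕ) : AddSubgroup (ι →₀ MvPolynomial σ k) where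
  carrier := {f | ∀ b s, coeff s (f b) ≠ 0 → s.degree + deg b = e}
  add_mem' := by
    intro f g hf hg b s h
    by_cases h1 : coeff s (f b) = 0
    · by_cases h2 : coeff s (g b) = 0
      · simp [h1, h2] at h
      · exact hg b s h2
    · exact hf b s h1
  zero_mem' := by
    intro b s h
    simp at h
  neg_mem' := by
    intro f hf b s h
    apply hf b s
    simpa using h

theorem mem_Fpc {ι : Type} {deg : ι → ℕ} {e : ℕ} {f : ι →₀ MvPolynomial σ k} :
    f ∈ Fpc deg e ↔ ∀ b s, coeff s (f b) ≠ 0 → s.degree + deg b = e := Iff.rfl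

theorem exists_of_coeff_mul_ne {p q : MvPolynomial σ k} {s : σ →₀ ℕ} (h : coeff s (p * q) ≠ 0) :
    ∃ s1 s2, s1 + s2 = s ∧ coeff s1 p ≠ 0 ∧ coeff s2 q ≠ 0 := by
  classical
  rw [coeff_mul] at h
  obtain ⟨x, hx, hne⟩ := Finset.exists_ne_zero_of_sum_ne_zero h
  exact ⟨x.1, x.2, Finset.HasAntidiagonal.mem_antidiagonal.1 hx, left_ne_zero_of_mul hne, right_ne_zero_of_mul hne⟩

theorem smul_mem_Fpc {ι : Type} {deg : ι → ℕ} {d e : ℕ} {f : ι →₀ MvPolynomial σ k}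
    {p : MvPolynomial σ k} (hf : f ∈ Fpc deg d)
    (hp : ∀ s, coeff s p ≠ 0 → s.degree + d = e) : p • f ∈ Fpc deg e := by
  intro b s h
  rw [Finsupp.smul_apply, smul_eq_mul] at h
  obtain ⟨s1, s2, rfl, h1, h2⟩ := exists_of_coeff_mul_ne h
  rw [map_add, add_assoc, hf b s2 h2, hp s1 h1]

theorem single_mem_Fpc {ι : Type} {deg : ι → ℕ} {e : ℕ} {b : ι} {p : MvPolynomial σ k}
    (hp : ∀ s, coeff s p ≠ 0 → s.degree + deg b = e) : Finsupp.single b p ∈ Fpc deg e := by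
  classical
  intro c s h
  rw [Finsupp.single_apply] at h
  split_ifs at h with hbc
  · subst hbc; exact hp s h
  · simp at h

theorem basis_mem_Fpc {ι : Type} (deg : ι → ℕ) (b : ι) :
    (Finsupp.single b 1 : ι →₀ MvPolynomial σ k) ∈ Fpc deg (deg b) := by
  classical
  apply single_mem_Fpc
  intro s h
  rw [coeff_one] at h
  split_ifs at h with h0
  · subst h0; simp
  · simp at h

/-- A map of graded free modules. -/
def GrMap {ι κ : Type} (deg : ι → ℕ) (dg : κ → ℕ)
    (φ : (ι →₀ MvPolynomial σ k) →ₗ[MvPolynomial σ k] (κ →₀ MvPolynomial σ k)) : Prop :=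
  ∀ e f, f ∈ Fpc deg e → φ f ∈ Fpc dg e

theorem GrMap.of_basis {ι κ : Type} {deg : ι → ℕ} {dg : κ → ℕ}
    {φ : (ι →₀ MvPolynomial σ k) →ₗ[MvPolynomial σ k] (κ →₀ MvPolynomial σ k)}
    (h : ∀ b, φ (Finsupp.single b 1) ∈ Fpc dg (deg b)) : GrMap deg dg φ := by
  intro e f hf
  have h1 : f = f.sum fun b p => p • (Finsupp.single b 1 : ι →₀ MvPolynomial σ k) := by
    conv_lhs => rw [← Finsupp.sum_single f]
    simp
  rw [h1, map_finsuppSum]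
  refine AddSubgroup.sum_mem _ fun b _ => ?_
  simp only [map_smul]
  exact smul_mem_Fpc (h b) (hf b)

/-- The degree `e` component. -/
def cmp {ι : Type} (deg : ι → ℕ) (e : ℕ) (f : ι →₀ MvPolynomial σ k) : ι →₀ MvPolynomial σ k :=
  Finsupp.onFinset f.support
    (fun b => if deg b ≤ e then homogeneousComponent (e - deg b) (f b) else 0) (by
      intro b h
      rw [Finsupp.mem_support_iff]
      rintro h0
      simp [h0] at h)

theorem coeff_cmp {ι : Type} (deg : ι → ℕ) (e : ℕ) (f : ι →₀ MvPolynomial σ k) (b : ι)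
    (s : σ →₀ ℕ) :
    coeff s (cmp deg e f b) = if s.degree + deg b = e then coeff s (f b) else 0 := by
  simp only [cmp, Finsupp.onFinset_apply]
  split_ifs with h1 h2 h2
  · rw [coeff_homogeneousComponent, if_pos (by omega)]
  · rw [coeff_homogeneousComponent, if_neg (by omega)]
  · omega
  · simp

theorem cmp_mem {ι : Type} (deg : ι → ℕ) (e : ℕ) (f : ι →₀ MvPolynomial σ k) :
    cmp deg e f ∈ Fpc deg e := by
  intro b s h
  rw [coeff_cmp] at h
  by_contra h0
  simp [h0] at h

theorem cmp_add {ι : Type} (deg : ι → ℕ) (e : ℕ) (f g : ι →₀ MvPolynomial σ k) :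
    cmp deg e (f + g) = cmp deg e f + cmp deg e g := by
  ext b s
  rw [Finsupp.add_apply, coeff_add]
  simp only [coeff_cmp]
  split_ifs <;> simp

theorem cmp_zero {ι : Type} (deg : ι → ℕ) (e : ℕ) :
    cmp deg e (0 : ι →₀ MvPolynomial σ k) = 0 := by
  ext b s
  simp [coeff_cmp]

theorem cmp_of_mem {ι : Type} {deg : ι → ℕ} {e : ℕ} {f : ι →₀ MvPolynomial σ k}
    (hf : f ∈ Fpc deg e) : cmp deg e f = f := by
  ext b s
  rw [coeff_cmp]
  split_ifs with h
  · rfl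
  · by_contra h0
    exact h (hf b s (Ne.symm h0))

theorem cmp_of_mem_ne {ι : Type} {deg : ι → ℕ} {e e' : ℕ} {f : ι →₀ MvPolynomial σ k}
    (hf : f ∈ Fpc deg e') (hne : e' ≠ e) : cmp deg e f = 0 := by
  ext b s
  rw [coeff_cmp]
  split_ifs with h
  · by_contra h0
    exact hne ((hf b s (by simpa using h0)).symm.trans h)
  · simp

theorem monomial_single_mem {ι : Type} (deg : ι → ℕ) (b : ι) (s : σ →₀ ℕ) (a : k) :
    Finsupp.single b (monomial s a) ∈ Fpc deg (s.degree + deg b) := by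
  classical
  apply single_mem_Fpc
  intro s' h
  rw [coeff_monomial] at h
  split_ifs at h with h0
  · rw [h0]
  · simp at h

/-- Additive properties may be checked on terms. -/
theorem free_induction {ι : Type} {P : (ι →₀ MvPolynomial σ k) → Prop} (h0 : P 0)
    (hadd : ∀ f g, P f → P g → P (f + g))
    (hm : ∀ b s a, P (Finsupp.single b (monomial s a))) (f : ι →₀ MvPolynomial σ k) : P f := by
  induction f using Finsupp.induction_linear with
  | zero => exact h0
  | add f g hf hg => exact hadd f g hf hg
  | single b p =>
    rw [p.as_sum, ← Finsupp.singleAddHom_apply, map_sum]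
    refine Finset.sum_induction _ P hadd h0 ?_
    intro s _
    exact hm b s _

theorem cmp_map {ι κ : Type} {deg : ι → ℕ} {dg : κ → ℕ}
    {φ : (ι →₀ MvPolynomial σ k) →ₗ[MvPolynomial σ k] (κ →₀ MvPolynomial σ k)}
    (h : GrMap deg dg φ) (e : ℕ) (f : ι →₀ MvPolynomial σ k) :
    cmp dg e (φ f) = φ (cmp deg e f) := by
  induction f using free_induction with
  | h0 => simp [cmp_zero]
  | hadd f g hf hg => rw [map_add, cmp_add, cmp_add, map_add, hf, hg]
  | hm b s a =>
    have h1 := monomial_single_mem deg b s a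
    by_cases he : s.degree + deg b = e
    · subst he
      rw [cmp_of_mem h1, cmp_of_mem (h _ _ h1)]
    · rw [cmp_of_mem_ne h1 he, cmp_of_mem_ne (h _ _ h1) he, map_zero]

/-- Graded submodule. -/
def IsHom {ι : Type} (deg : ι → ℕ) (N : Submodule (MvPolynomial σ k) (ι →₀ MvPolynomial σ k)) :
    Prop := ∀ e f, f ∈ N → cmp deg e f ∈ N

theorem isHom_ker {ι κ : Type} {deg : ι → ℕ} {dg : κ → ℕ}
    {φ : (ι →₀ MvPolynomial σ k) →ₗ[MvPolynomial σ k] (κ →₀ MvPolynomial σ k)}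
    (h : GrMap deg dg φ) : IsHom deg (LinearMap.ker φ) := by
  intro e f hf
  rw [LinearMap.mem_ker] at hf ⊢
  rw [← cmp_map h, hf, cmp_zero]

theorem mem_of_cmp {ι : Type} (deg : ι → ℕ)
    (N : Submodule (MvPolynomial σ k) (ι →₀ MvPolynomial σ k)) (f : ι →₀ MvPolynomial σ k)
    (h : ∀ e, cmp deg e f ∈ N) : f ∈ N := by
  have key : ∃ B, f = ∑ e ∈ Finset.range B, cmp deg e f := by
    obtain ⟨B, hB⟩ : ∃ B, ∀ b s, coeff s (f b) ≠ 0 → s.degree + deg b < B := by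
      refine ⟨(∑ b ∈ f.support, ∑ s ∈ (f b).support, (s.degree + deg b)) + 1, ?_⟩
      intro b s hs
      have hb : b ∈ f.support := by
        rw [Finsupp.mem_support_iff]
        rintro h0
        simp [h0] at hs
      have hs' : s ∈ (f b).support := mem_support_iff.2 hs
      have h1 := Finset.single_le_sum (f := fun b => ∑ s ∈ (f b).support, (s.degree + deg b))
        (fun _ _ => Nat.zero_le _) hb
      have h2 := Finset.single_le_sum (f := fun s : σ →₀ ℕ => s.degree + deg b)
        (fun _ _ => Nat.zero_le _) hs'
      omega
    refine ⟨B, ?_⟩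
    ext b s
    rw [Finsupp.finsetSum_apply, coeff_sum]
    simp only [coeff_cmp]
    rw [Finset.sum_ite_eq]
    split_ifs with hm
    · rfl
    · by_contra h0
      exact hm (Finset.mem_range.2 (hB b s h0))
  obtain ⟨B, hB⟩ := key
  rw [hB]
  exact N.sum_mem fun e _ => h e

end Graded



section RegBound

variable {k : Type} [Field k] {σ : Type}

/-- `N` has a graded free resolution of length at most `l` whose `i`-th shifts are `≤ R + i`. -/
def RegLE : ℕ → ∀ (ι : Type), (ι → ℕ) →
    Submodule (MvPolynomial σ k) (ι →₀ MvPolynomial σ k) → ℕ → Prop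
  | 0, _, deg, N, _ => ∀ e, ∀ y ∈ N, y ∈ Fpc deg e → y = 0
  | l + 1, ι, deg, N, R => ∃ (κ : Type) (_ : Finite κ) (dg : κ → ℕ)
      (φ : (κ →₀ MvPolynomial σ k) →ₗ[MvPolynomial σ k] (ι →₀ MvPolynomial σ k)),
      (∀ b, dg b ≤ R) ∧ GrMap dg deg φ ∧ (∀ f, φ f ∈ N) ∧
      (∀ e, ∀ y ∈ N, y ∈ Fpc deg e → ∃ f ∈ Fpc dg e, φ f = y) ∧
      RegLE l κ dg (LinearMap.ker φ) (R + 1)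

theorem RegLE.mono_R {l : ℕ} : ∀ {ι : Type} {deg : ι → ℕ}
    {N : Submodule (MvPolynomial σ k) (ι →₀ MvPolynomial σ k)} {R R' : ℕ},
    RegLE l ι deg N R → R ≤ R' → RegLE l ι deg N R' := by
  induction l with
  | zero => intro ι deg N R R' h _; exact h
  | succ l ih =>
    rintro ι deg N R R' ⟨κ, hκ, dg, φ, h1, h2, h3, h4, h5⟩ hR
    exact ⟨κ, hκ, dg, φ, fun b => (h1 b).trans hR, h2, h3, h4, ih h5 (by omega)⟩

theorem RegLE.succ {l : ℕ} : ∀ {ι : Type} {deg : ι → ℕ}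
    {N : Submodule (MvPolynomial σ k) (ι →₀ MvPolynomial σ k)} {R : ℕ},
    RegLE l ι deg N R → RegLE (l + 1) ι deg N R := by
  induction l with
  | zero =>
    intro ι deg N R h
    refine ⟨Empty, inferInstance, fun _ => 0, 0, fun b => b.elim, ?_, ?_, ?_, ?_⟩
    · intro e f _; exact (Fpc deg e).zero_mem
    · intro f; exact N.zero_mem
    · intro e y hy hye
      exact ⟨0, (Fpc _ e).zero_mem, by simp [h e y hy hye]⟩
    · intro e y _ _
      exact Subsingleton.elim _ _
  | succ l ih =>
    rintro ι deg N R ⟨κ, hκ, dg, φ, h1, h2, h3, h4, h5⟩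
    exact ⟨κ, hκ, dg, φ, h1, h2, h3, h4, ih h5⟩

theorem RegLE.mono_l {l l' : ℕ} (hl : l ≤ l') {ι : Type} {deg : ι → ℕ}
    {N : Submodule (MvPolynomial σ k) (ι →₀ MvPolynomial σ k)} {R : ℕ}
    (h : RegLE l ι deg N R) : RegLE l' ι deg N R := by
  induction hl with
  | refl => exact h
  | step _ ih => exact ih.succ

/-- Degreewise short exact sequence of graded submodules of graded free modules. -/
structure GSES {ι₁ ι₂ ι₃ : Type} (d₁ : ι₁ → ℕ) (d₂ : ι₂ → ℕ) (d₃ : ι₃ → ℕ)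
    (X : Submodule (MvPolynomial σ k) (ι₁ →₀ MvPolynomial σ k))
    (Y : Submodule (MvPolynomial σ k) (ι₂ →₀ MvPolynomial σ k))
    (Z : Submodule (MvPolynomial σ k) (ι₃ →₀ MvPolynomial σ k))
    (f : (ι₁ →₀ MvPolynomial σ k) →ₗ[MvPolynomial σ k] (ι₂ →₀ MvPolynomial σ k))
    (g : (ι₂ →₀ MvPolynomial σ k) →ₗ[MvPolynomial σ k] (ι₃ →₀ MvPolynomial σ k)) : Prop where
  gf : GrMap d₁ d₂ f
  gg : GrMap d₂ d₃ g
  fmem : ∀ x ∈ X, f x ∈ Y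
  gmem : ∀ y ∈ Y, g y ∈ Z
  finj : ∀ x ∈ X, f x = 0 → x = 0
  comp : ∀ x ∈ X, g (f x) = 0
  exact : ∀ e, ∀ y ∈ Y, y ∈ Fpc d₂ e → g y = 0 → ∃ x ∈ X, x ∈ Fpc d₁ e ∧ f x = y
  surj : ∀ e, ∀ z ∈ Z, z ∈ Fpc d₃ e → ∃ y ∈ Y, y ∈ Fpc d₂ e ∧ g y = z

theorem horseshoe {l : ℕ} : ∀ {ι₁ ι₂ ι₃ : Type} {d₁ : ι₁ → ℕ} {d₂ : ι₂ → ℕ} {d₃ : ι₃ → ℕ}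
    {X : Submodule (MvPolynomial σ k) (ι₁ →₀ MvPolynomial σ k)}
    {Y : Submodule (MvPolynomial σ k) (ι₂ →₀ MvPolynomial σ k)}
    {Z : Submodule (MvPolynomial σ k) (ι₃ →₀ MvPolynomial σ k)}
    {f : (ι₁ →₀ MvPolynomial σ k) →ₗ[MvPolynomial σ k] (ι₂ →₀ MvPolynomial σ k)}
    {g : (ι₂ →₀ MvPolynomial σ k) →ₗ[MvPolynomial σ k] (ι₃ →₀ MvPolynomial σ k)} {R : ℕ},
    GSES d₁ d₂ d₃ X Y Z f g → RegLE l ι₁ d₁ X R → RegLE l ι₃ d₃ Z R → RegLE l ι₂ d₂ Y R := by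
  induction l with
  | zero =>
    intro ι₁ ι₂ ι₃ d₁ d₂ d₃ X Y Z f g R H hX hZ e y hy hye
    have h0 : g y = 0 := hZ e _ (H.gmem y hy) (H.gg e y hye)
    obtain ⟨x, hx, hxe, rfl⟩ := H.exact e y hy hye h0
    rw [hX e x hx hxe, map_zero]
  | succ l ih =>
    rintro ι₁ ι₂ ι₃ d₁ d₂ d₃ X Y Z f g R H ⟨κ, hκ, dg, φ, h1, h2, h3, h4, h5⟩
      ⟨κ', hκ', dg', φ', h1', h2', h3', h4', h5'⟩
    have hl : ∀ b : κ', ∃ y ∈ Y, y ∈ Fpc d₂ (dg' b) ∧ g y = φ' (Finsupp.single b 1) := fun b =>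
      H.surj _ _ (h3' _) (h2' _ _ (basis_mem_Fpc dg' b))
    choose y hyY hye hyg using hl
    let p1 : (κ ⊕ κ' →₀ MvPolynomial σ k) →ₗ[MvPolynomial σ k] (κ →₀ MvPolynomial σ k) :=
      Finsupp.lcomapDomain Sum.inl Sum.inl_injective
    let p2 : (κ ⊕ κ' →₀ MvPolynomial σ k) →ₗ[MvPolynomial σ k] (κ' →₀ MvPolynomial σ k) :=
      Finsupp.lcomapDomain Sum.inr Sum.inr_injective
    let i1 : (κ →₀ MvPolynomial σ k) →ₗ[MvPolynomial σ k] (κ ⊕ κ' →₀ MvPolynomial σ k) :=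
      Finsupp.lmapDomain _ _ Sum.inl
    let i2 : (κ' →₀ MvPolynomial σ k) →ₗ[MvPolynomial σ k] (κ ⊕ κ' →₀ MvPolynomial σ k) :=
      Finsupp.lmapDomain _ _ Sum.inr
    have p1a : ∀ f b, p1 f b = f (Sum.inl b) := fun f b => rfl
    have p2a : ∀ f b, p2 f b = f (Sum.inr b) := fun f b => rfl
    have i1l : ∀ f b, i1 f (Sum.inl b) = f b := fun f b =>
      Finsupp.mapDomain_apply Sum.inl_injective _ _
    have i1r : ∀ f b, i1 f (Sum.inr b) = 0 := fun f b =>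
      Finsupp.mapDomain_of_notMem_range _ _ (by simp)
    have i2r : ∀ f b, i2 f (Sum.inr b) = f b := fun f b =>
      Finsupp.mapDomain_apply Sum.inr_injective _ _
    have i2l : ∀ f b, i2 f (Sum.inl b) = 0 := fun f b =>
      Finsupp.mapDomain_of_notMem_range _ _ (by simp)
    have p1i1 : ∀ f, p1 (i1 f) = f := fun f => by ext1 b; rw [p1a, i1l]
    have p2i1 : ∀ f, p2 (i1 f) = 0 := fun f => by ext1 b; rw [p2a, i1r]; rfl
    have p1i2 : ∀ f, p1 (i2 f) = 0 := fun f => by ext1 b; rw [p1a, i2l]; rfl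
    have p2i2 : ∀ f, p2 (i2 f) = f := fun f => by ext1 b; rw [p2a, i2r]
    have dec : ∀ f, f = i1 (p1 f) + i2 (p2 f) := fun f => by
      ext1 b
      rcases b with b | b
      · rw [Finsupp.add_apply, i1l, i2l, p1a, add_zero]
      · rw [Finsupp.add_apply, i1r, i2r, p2a, zero_add]
    let dS : κ ⊕ κ' → ℕ := Sum.elim dg dg'
    have gp1 : GrMap dS dg p1 := fun e f hf b s hs => hf (Sum.inl b) s hs
    have gp2 : GrMap dS dg' p2 := fun e f hf b s hs => hf (Sum.inr b) s hs
    have gi1 : GrMap dg dS i1 := by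
      intro e f hf b s hs
      rcases b with b | b
      · rw [i1l] at hs; exact hf b s hs
      · rw [i1r] at hs; simp at hs
    have gi2 : GrMap dg' dS i2 := by
      intro e f hf b s hs
      rcases b with b | b
      · rw [i2l] at hs; simp at hs
      · rw [i2r] at hs; exact hf b s hs
    let ψ := Finsupp.linearCombination (MvPolynomial σ k) y
    have gψ : GrMap dg' d₂ ψ := GrMap.of_basis fun b => by
      simp only [ψ, Finsupp.linearCombination_single, one_smul]; exact hye b
    have hψY : ∀ f, ψ f ∈ Y := fun f => by
      simp only [ψ, Finsupp.linearCombination_apply]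
      exact Y.sum_mem fun b _ => Y.smul_mem _ (hyY b)
    have hgψ : ∀ f, g (ψ f) = φ' f := by
      have : g ∘ₗ ψ = φ' := by
        apply Finsupp.lhom_ext'
        intro b
        apply LinearMap.ext_ring
        simp [ψ, hyg]
      intro f; rw [← this]; rfl
    let Φ := f ∘ₗ φ ∘ₗ p1 + ψ ∘ₗ p2
    have hΦ : ∀ x, Φ x = f (φ (p1 x)) + ψ (p2 x) := fun x => rfl
    refine ⟨κ ⊕ κ', inferInstance, dS, Φ, ?_, ?_, ?_, ?_, ?_⟩
    · rintro (b | b)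
      · exact h1 b
      · exact h1' b
    · intro e x hx
      rw [hΦ]
      exact AddSubgroup.add_mem _ (H.gf _ _ (h2 _ _ (gp1 _ _ hx))) (gψ _ _ (gp2 _ _ hx))
    · intro x
      rw [hΦ]
      exact Y.add_mem (H.fmem _ (h3 _)) (hψY _)
    · intro e v hv hve
      obtain ⟨c, hc, hcv⟩ := h4' e (g v) (H.gmem v hv) (H.gg e v hve)
      have hw : v - ψ c ∈ Y := Y.sub_mem hv (hψY c)
      have hwe : v - ψ c ∈ Fpc d₂ e := AddSubgroup.sub_mem _ hve (gψ _ _ hc)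
      obtain ⟨x, hx, hxe, hfx⟩ := H.exact e _ hw hwe (by rw [map_sub, hgψ, hcv, sub_self])
      obtain ⟨a, ha, hax⟩ := h4 e x hx hxe
      refine ⟨i1 a + i2 c, AddSubgroup.add_mem _ (gi1 _ _ ha) (gi2 _ _ hc), ?_⟩
      rw [hΦ, map_add p1, map_add p2, p1i1, p1i2, p2i1, p2i2, add_zero, zero_add, hax, hfx]
      abel
    · have key : GSES dg dS dg' (LinearMap.ker φ) (LinearMap.ker Φ) (LinearMap.ker φ') i1 p2 := by
        refine ⟨gi1, gp2, ?_, ?_, ?_, ?_, ?_, ?_⟩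
        · intro x hx
          rw [LinearMap.mem_ker] at hx ⊢
          rw [hΦ, p1i1, p2i1, hx, map_zero, map_zero, add_zero]
        · intro x hx
          rw [LinearMap.mem_ker, hΦ] at hx
          have := congrArg g hx
          rw [map_add, H.comp _ (h3 _), hgψ, map_zero, zero_add] at this
          exact this
        · intro x _ hx0
          rw [← p1i1 x, hx0, map_zero]
        · intro x _
          exact p2i1 x
        · intro e x hx hxe hx0
          refine ⟨p1 x, ?_, gp1 _ _ hxe, ?_⟩
          · rw [LinearMap.mem_ker, hΦ, hx0, map_zero, add_zero] at hx
            exact H.finj _ (h3 _) hx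
          · conv_rhs => rw [dec x, hx0, map_zero, add_zero]
        · intro e z hz hze
          rw [LinearMap.mem_ker] at hz
          obtain ⟨x, hx, hxe, hfx⟩ := H.exact e (ψ z) (hψY z) (gψ _ _ hze) (by rw [hgψ, hz])
          obtain ⟨a, ha, hax⟩ := h4 e x hx hxe
          refine ⟨i2 z - i1 a, ?_, AddSubgroup.sub_mem _ (gi2 _ _ hze) (gi1 _ _ ha), ?_⟩
          · rw [LinearMap.mem_ker, hΦ, map_sub p1, map_sub p2, p1i1, p1i2, p2i1, p2i2, zero_sub,
              sub_zero, map_neg, map_neg, hax, hfx, neg_add_cancel]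
          · rw [map_sub, p2i2, p2i1, sub_zero]
      exact ih key h5 h5'

/-- Quotients: from `0 → X → Y → Z → 0` with a graded retraction of `X → Y`. -/
theorem regLE_quot {l : ℕ} {ι₁ ι₂ ι₃ : Type} {d₁ : ι₁ → ℕ} {d₂ : ι₂ → ℕ} {d₃ : ι₃ → ℕ}
    {X : Submodule (MvPolynomial σ k) (ι₁ →₀ MvPolynomial σ k)}
    {Y : Submodule (MvPolynomial σ k) (ι₂ →₀ MvPolynomial σ k)}
    {Z : Submodule (MvPolynomial σ k) (ι₃ →₀ MvPolynomial σ k)}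
    {f : (ι₁ →₀ MvPolynomial σ k) →ₗ[MvPolynomial σ k] (ι₂ →₀ MvPolynomial σ k)}
    {g : (ι₂ →₀ MvPolynomial σ k) →ₗ[MvPolynomial σ k] (ι₃ →₀ MvPolynomial σ k)} {R : ℕ}
    (H : GSES d₁ d₂ d₃ X Y Z f g)
    (r : (ι₂ →₀ MvPolynomial σ k) →ₗ[MvPolynomial σ k] (ι₁ →₀ MvPolynomial σ k))
    (gr : GrMap d₂ d₁ r) (hr : ∀ y ∈ Y, g y = 0 → r y ∈ X ∧ f (r y) = y)
    (hY : RegLE (l + 1) ι₂ d₂ Y R) (hX : RegLE l ι₁ d₁ X (R + 1)) :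
    RegLE (l + 1) ι₃ d₃ Z R := by
  obtain ⟨κ, hκ, dg, φ, h1, h2, h3, h4, h5⟩ := hY
  refine ⟨κ, hκ, dg, g ∘ₗ φ, h1, fun e x hx => H.gg _ _ (h2 _ _ hx), fun x => H.gmem _ (h3 x), ?_, ?_⟩
  · intro e z hz hze
    obtain ⟨y, hy, hye, rfl⟩ := H.surj e z hz hze
    obtain ⟨x, hx, rfl⟩ := h4 e y hy hye
    exact ⟨x, hx, rfl⟩
  · have key : GSES dg dg d₁ (LinearMap.ker φ) (LinearMap.ker (g ∘ₗ φ)) X LinearMap.id (r ∘ₗ φ) := by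
      refine ⟨fun e x hx => hx, fun e x hx => gr _ _ (h2 _ _ hx), ?_, ?_, ?_, ?_, ?_, ?_⟩
      · intro x hx
        rw [LinearMap.mem_ker] at hx ⊢
        simp [hx]
      · intro x hx
        exact (hr _ (h3 x) hx).1
      · intro x _ h; exact h
      · intro x hx
        rw [LinearMap.mem_ker] at hx
        simp [hx]
      · intro e x hx hxe h0
        refine ⟨x, ?_, hxe, rfl⟩
        have := (hr _ (h3 x) hx).2
        rw [LinearMap.comp_apply] at h0
        rw [h0, map_zero] at this
        exact this.symm
      · intro e x hx hxe
        obtain ⟨a, ha, hax⟩ := h4 e (f x) (H.fmem x hx) (H.gf _ _ hxe)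
        have hz : g (f x) = 0 := H.comp x hx
        refine ⟨a, ?_, ha, ?_⟩
        · rw [LinearMap.mem_ker, LinearMap.comp_apply, hax, hz]
        · rw [LinearMap.comp_apply, hax]
          have h6 := hr _ (H.fmem x hx) hz
          have h7 : f (r (f x) - x) = 0 := by rw [map_sub, h6.2, sub_self]
          exact sub_eq_zero.1 (H.finj _ (X.sub_mem h6.1 hx) h7)
    exact horseshoe key h5 hX

/-- Invariance under graded isomorphism with degree shift. -/
theorem RegLE.shift {l : ℕ} : ∀ {ι ι' : Type} {deg : ι → ℕ} {deg' : ι' → ℕ}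
    {N : Submodule (MvPolynomial σ k) (ι →₀ MvPolynomial σ k)}
    {N' : Submodule (MvPolynomial σ k) (ι' →₀ MvPolynomial σ k)} {R d : ℕ}
    (T : (ι →₀ MvPolynomial σ k) →ₗ[MvPolynomial σ k] (ι' →₀ MvPolynomial σ k))
    (_ : Function.Injective T)
    (_ : ∀ e x, T x ∈ Fpc deg' e ↔ x ∈ Fpc (fun b => deg b + d) e)
    (_ : ∀ x ∈ N, T x ∈ N') (_ : ∀ y ∈ N', ∃ x ∈ N, T x = y),
    RegLE l ι deg N R → RegLE l ι' deg' N' (R + d) := by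
  have hFd : ∀ {ι : Type} (deg : ι → ℕ) (d e : ℕ) (x : ι →₀ MvPolynomial σ k),
      x ∈ Fpc (fun b => deg b + d) (e + d) ↔ x ∈ Fpc deg e := by
    intro ι deg d e x
    constructor
    · intro h b s hs
      have := h b s hs
      simp only at this
      omega
    · intro h b s hs
      have := h b s hs
      simp only
      omega
  have hF0 : ∀ {ι : Type} (deg : ι → ℕ) (d e : ℕ) (x : ι →₀ MvPolynomial σ k),
      x ∈ Fpc (fun b => deg b + d) e → e < d → x = 0 := by
    intro ι deg d e x h he
    ext b s
    by_contra h0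
    have := h b s (by simpa using h0)
    simp only at this
    omega
  induction l with
  | zero =>
    intro ι ι' deg deg' N N' R d T hT hdeg hN hN' h e y hy hye
    obtain ⟨x, hx, rfl⟩ := hN' y hy
    rw [hdeg] at hye
    by_cases he : e < d
    · rw [hF0 _ _ _ _ hye he, map_zero]
    · obtain ⟨e, rfl⟩ := Nat.exists_eq_add_of_le' (not_lt.1 he)
      rw [hFd] at hye
      rw [h e x hx hye, map_zero]
  | succ l ih =>
    rintro ι ι' deg deg' N N' R d T hT hdeg hN hN' ⟨κ, hκ, dg, φ, h1, h2, h3, h4, h5⟩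
    refine ⟨κ, hκ, fun b => dg b + d, T ∘ₗ φ, fun b => Nat.add_le_add_right (h1 b) d, ?_,
      fun f => hN _ (h3 f), ?_, ?_⟩
    · intro e f hf
      rw [LinearMap.comp_apply, hdeg]
      by_cases he : e < d
      · rw [hF0 _ _ _ _ hf he, map_zero]
        exact AddSubgroup.zero_mem _
      · obtain ⟨e, rfl⟩ := Nat.exists_eq_add_of_le' (not_lt.1 he)
        rw [hFd] at hf ⊢
        exact h2 _ _ hf
    · intro e y hy hye
      obtain ⟨x, hx, rfl⟩ := hN' y hy
      rw [hdeg] at hye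
      by_cases he : e < d
      · exact ⟨0, AddSubgroup.zero_mem _, by rw [hF0 _ _ _ _ hye he, map_zero, map_zero]⟩
      · obtain ⟨e, rfl⟩ := Nat.exists_eq_add_of_le' (not_lt.1 he)
        rw [hFd] at hye
        obtain ⟨f, hf, rfl⟩ := h4 e x hx hye
        exact ⟨f, (hFd _ _ _ _).2 hf, rfl⟩
    · have hk : LinearMap.ker (T ∘ₗ φ) = LinearMap.ker φ := by
        ext x
        rw [LinearMap.mem_ker, LinearMap.mem_ker, LinearMap.comp_apply]
        exact ⟨fun h => hT (by rw [h, map_zero]), fun h => by rw [h, map_zero]⟩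
      rw [hk, show R + d + 1 = R + 1 + d by omega]
      exact ih LinearMap.id (fun _ _ h => h) (fun e x => Iff.rfl) (fun x h => h)
        (fun y h => ⟨y, h, rfl⟩) h5

/-- The first step of a resolution may be indexed by `Fin r`. -/
theorem RegLE.step_fin {l : ℕ} {ι : Type} {deg : ι → ℕ}
    {N : Submodule (MvPolynomial σ k) (ι →₀ MvPolynomial σ k)} {R : ℕ}
    (h : RegLE l ι deg N R) (hN : IsHom deg N) :
    ∃ (r : ℕ) (dg : Fin r → ℕ)
      (φ : (Fin r →₀ MvPolynomial σ k) →ₗ[MvPolynomial σ k] (ι →₀ MvPolynomial σ k)),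
      (∀ b, dg b ≤ R) ∧ GrMap dg deg φ ∧ LinearMap.range φ = N ∧
      RegLE l (Fin r) dg (LinearMap.ker φ) (R + 1) := by
  obtain ⟨κ, hκ, dg, φ, h1, h2, h3, h4, h5⟩ := h.succ
  obtain ⟨r, ⟨E⟩⟩ := Finite.exists_equiv_fin κ
  let T := (Finsupp.domLCongr (M := MvPolynomial σ k) (R := MvPolynomial σ k) E)
  have hTa : ∀ f b, T f b = f (E.symm b) := fun f b => rfl
  have hTs : ∀ f b, T.symm f b = f (E b) := fun f b => rfl
  have hmem : ∀ e f, T f ∈ Fpc (fun b => dg (E.symm b)) e ↔ f ∈ Fpc dg e := by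
    intro e f
    constructor
    · intro h b s hs
      have := h (E b) s (by rw [hTa, E.symm_apply_apply]; exact hs)
      simpa using this
    · intro h b s hs
      exact h _ s hs
  refine ⟨r, fun b => dg (E.symm b), φ ∘ₗ T.symm.toLinearMap, fun b => h1 _, ?_, ?_, ?_⟩
  · intro e f hf
    apply h2
    rw [← hmem]
    simpa using hf
  · apply le_antisymm
    · rintro _ ⟨f, rfl⟩
      exact h3 _
    · intro y hy
      apply mem_of_cmp deg
      intro e
      obtain ⟨f, _, hf⟩ := h4 e _ (hN e y hy) (cmp_mem deg e y)
      exact ⟨T f, by simpa using hf⟩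
  · refine RegLE.shift (d := 0) T.toLinearMap T.injective (fun e x => hmem e x) ?_ ?_ h5
    · intro x hx
      rw [LinearMap.mem_ker] at hx ⊢
      simpa using hx
    · intro y hy
      rw [LinearMap.mem_ker] at hy
      exact ⟨T.symm y, hy, by simp⟩

end RegBound



section MonomialIdeals

variable {k : Type} [Field k] {σ : Type}

/-- The monomial ideal spanned by the monomials in an upper set, inside the free module of
rank one. -/
def MIs (k : Type) [Field k] {σ : Type} (U : Set (σ →₀ ℕ)) (hU : IsUpperSet U) :
    Submodule (MvPolynomial σ k) (Fin 1 →₀ MvPolynomial σ k) where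
  carrier := {f | ∀ s, coeff s (f 0) ≠ 0 → s ∈ U}
  add_mem' := by
    intro f g hf hg s h
    by_cases h1 : coeff s (f 0) = 0
    · by_cases h2 : coeff s (g 0) = 0
      · simp [h1, h2] at h
      · exact hg s h2
    · exact hf s h1
  zero_mem' := by
    intro s h
    simp at h
  smul_mem' := by
    intro p f hf s h
    rw [Finsupp.smul_apply, smul_eq_mul] at h
    obtain ⟨s1, s2, rfl, _, h2⟩ := exists_of_coeff_mul_ne h
    exact hU (by simp) (hf s2 h2)

theorem mem_MIs {U : Set (σ →₀ ℕ)} {hU : IsUpperSet U} {f : Fin 1 →₀ MvPolynomial σ k} :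
    f ∈ MIs k U hU ↔ ∀ s, coeff s (f 0) ≠ 0 → s ∈ U := Iff.rfl

theorem isHom_MIs (U : Set (σ →₀ ℕ)) (hU : IsUpperSet U) :
    IsHom (fun _ => 0) (MIs k U hU) := by
  intro e f hf s hs
  rw [coeff_cmp] at hs
  split_ifs at hs
  · exact hf s hs
  · simp at hs

/-- Regularity bound for the monomial ideal of an upper set. -/
def RegU (k : Type) [Field k] {σ : Type} (U : Set (σ →₀ ℕ)) (R : ℕ) : Prop :=
  ∃ hU : IsUpperSet U, ∃ l, RegLE l (Fin 1) (fun _ => 0) (MIs k U hU) R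

theorem RegU.mono {U : Set (σ →₀ ℕ)} {R R' : ℕ} (h : RegU k U R) (hR : R ≤ R') : RegU k U R' := by
  obtain ⟨hU, l, h⟩ := h
  exact ⟨hU, l, h.mono_R hR⟩

theorem fin1_ext {f g : Fin 1 →₀ MvPolynomial σ k} (h : ∀ s, coeff s (f 0) = coeff s (g 0)) :
    f = g := by
  refine Finsupp.ext fun b => MvPolynomial.ext _ _ fun s => ?_
  rw [Subsingleton.elim b 0]
  exact h s

theorem regU_empty (R : ℕ) : RegU k (∅ : Set (σ →₀ ℕ)) R := by
  refine ⟨isUpperSet_empty, 0, ?_⟩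
  intro e y hy _
  apply fin1_ext
  intro s
  by_contra h
  exact hy s (by simpa using h)

theorem regU_univ (R : ℕ) : RegU k (Set.univ : Set (σ →₀ ℕ)) R := by
  refine ⟨isUpperSet_univ, 1, Fin 1, inferInstance, fun _ => 0, LinearMap.id, ?_, ?_, ?_, ?_, ?_⟩
  · intro b; exact Nat.zero_le _
  · intro e f hf; exact hf
  · intro f s _; trivial
  · intro e y _ hy; exact ⟨y, hy, rfl⟩
  · intro e y hy _; exact hy

theorem RegU.shift {U : Set (σ →₀ ℕ)} {R : ℕ} (h : RegU k U R) (m : σ →₀ ℕ) :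
    RegU k {a | m ≤ a ∧ a - m ∈ U} (R + m.degree) := by
  obtain ⟨hU, l, h⟩ := h
  have hU' : IsUpperSet {a | m ≤ a ∧ a - m ∈ U} := by
    rintro a b hab ⟨h1, h2⟩
    exact ⟨h1.trans hab, hU (tsub_le_tsub_right hab m) h2⟩
  refine ⟨hU', l, ?_⟩
  let T : (Fin 1 →₀ MvPolynomial σ k) →ₗ[MvPolynomial σ k] (Fin 1 →₀ MvPolynomial σ k) :=
    LinearMap.lsmul (MvPolynomial σ k) _ (monomial m 1)
  have hT1 : ∀ f b s, coeff (m + s) (T f b) = coeff s (f b) := by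
    intro f b s
    change coeff (m + s) ((monomial m 1 : MvPolynomial σ k) * f b) = _
    rw [coeff_monomial_mul, one_mul]
  have hT2 : ∀ f b s, ¬ m ≤ s → coeff s (T f b) = 0 := by
    intro f b s hs
    change coeff s ((monomial m 1 : MvPolynomial σ k) * f b) = _
    rw [coeff_monomial_mul', if_neg hs]
  have hT3 : ∀ f b s, m ≤ s → coeff s (T f b) = coeff (s - m) (f b) := by
    intro f b s hs
    rw [← hT1 f b (s - m), add_tsub_cancel_of_le hs]
  refine RegLE.shift (d := m.degree) T ?_ ?_ ?_ ?_ h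
  · intro f g hfg
    apply fin1_ext
    intro s
    rw [← hT1 f 0 s, ← hT1 g 0 s, hfg]
  · intro e x
    constructor
    · intro h b s hs
      have := h b (m + s) (by rw [hT1]; exact hs)
      rw [map_add] at this
      simp only at this ⊢
      omega
    · intro h b s hs
      by_cases hm : m ≤ s
      · rw [hT3 _ _ _ hm] at hs
        have := h b _ hs
        have h2 : s.degree = m.degree + (s - m).degree := by
          rw [← map_add, add_tsub_cancel_of_le hm]
        simp only at this ⊢
        omega
      · exact absurd (hT2 x b s hm) hs
  · intro x hx s hs
    by_cases hm : m ≤ s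
    · rw [hT3 _ _ _ hm] at hs
      exact ⟨hm, hx _ hs⟩
    · exact absurd (hT2 x 0 s hm) hs
  · intro y hy
    let p : MvPolynomial σ k := ∑ s ∈ (y 0).support, monomial (s - m) (coeff s (y 0))
    have hTp : T (Finsupp.single 0 p) = y := by
      apply fin1_ext
      intro s
      congr 1
      change (monomial m 1 : MvPolynomial σ k) * (Finsupp.single (0 : Fin 1) p 0) = y 0
      rw [Finsupp.single_eq_same, Finset.mul_sum]
      conv_rhs => rw [(y 0).as_sum]
      refine Finset.sum_congr rfl fun s hs => ?_
      rw [monomial_mul, one_mul, add_tsub_cancel_of_le]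
      exact (hy s (mem_support_iff.1 hs)).1
    refine ⟨Finsupp.single 0 p, ?_, hTp⟩
    intro s hs
    rw [← hT1 (Finsupp.single 0 p) 0 s, hTp] at hs
    have := (hy _ hs).2
    rwa [add_tsub_cancel_left] at this

theorem RegU.union {U V : Set (σ →₀ ℕ)} {R : ℕ} (h1 : RegU k U R) (h2 : RegU k V R)
    (h3 : RegU k (U ∩ V) (R + 1)) : RegU k (U ∪ V) R := by
  classical
  obtain ⟨hU, l1, h1⟩ := h1
  obtain ⟨hV, l2, h2⟩ := h2
  obtain ⟨hW, l3, h3⟩ := h3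
  obtain ⟨l, hl1, hl2, hl3⟩ : ∃ l, l1 ≤ l + 1 ∧ l2 ≤ l + 1 ∧ l3 ≤ l :=
    ⟨l1 + l2 + l3, by omega, by omega, by omega⟩
  replace h1 := h1.mono_l hl1
  replace h2 := h2.mono_l hl2
  replace h3 := h3.mono_l hl3
  refine ⟨hU.union hV, l + 1, ?_⟩
  let S := MvPolynomial σ k
  let p1 : (Fin 1 ⊕ Fin 1 →₀ S) →ₗ[S] (Fin 1 →₀ S) :=
    Finsupp.lcomapDomain Sum.inl Sum.inl_injective
  let p2 : (Fin 1 ⊕ Fin 1 →₀ S) →ₗ[S] (Fin 1 →₀ S) :=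
    Finsupp.lcomapDomain Sum.inr Sum.inr_injective
  let i1 : (Fin 1 →₀ S) →ₗ[S] (Fin 1 ⊕ Fin 1 →₀ S) := Finsupp.lmapDomain _ _ Sum.inl
  let i2 : (Fin 1 →₀ S) →ₗ[S] (Fin 1 ⊕ Fin 1 →₀ S) := Finsupp.lmapDomain _ _ Sum.inr
  have p1a : ∀ f b, p1 f b = f (Sum.inl b) := fun f b => rfl
  have p2a : ∀ f b, p2 f b = f (Sum.inr b) := fun f b => rfl
  have i1l : ∀ f b, i1 f (Sum.inl b) = f b := fun f b =>
    Finsupp.mapDomain_apply Sum.inl_injective _ _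
  have i1r : ∀ f b, i1 f (Sum.inr b) = 0 := fun f b =>
    Finsupp.mapDomain_of_notMem_range _ _ (by simp)
  have i2r : ∀ f b, i2 f (Sum.inr b) = f b := fun f b =>
    Finsupp.mapDomain_apply Sum.inr_injective _ _
  have i2l : ∀ f b, i2 f (Sum.inl b) = 0 := fun f b =>
    Finsupp.mapDomain_of_notMem_range _ _ (by simp)
  have p1i1 : ∀ f, p1 (i1 f) = f := fun f =>
    Finsupp.ext fun b => by rw [p1a, i1l]
  have p2i1 : ∀ f, p2 (i1 f) = 0 := fun f =>
    Finsupp.ext fun b => by rw [p2a, i1r]; rfl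
  have p1i2 : ∀ f, p1 (i2 f) = 0 := fun f =>
    Finsupp.ext fun b => by rw [p1a, i2l]; rfl
  have p2i2 : ∀ f, p2 (i2 f) = f := fun f =>
    Finsupp.ext fun b => by rw [p2a, i2r]
  have dec : ∀ f, f = i1 (p1 f) + i2 (p2 f) := fun f => by
    ext1 b
    rcases b with b | b
    · rw [Finsupp.add_apply, i1l, i2l, p1a, add_zero]
    · rw [Finsupp.add_apply, i1r, i2r, p2a, zero_add]
  let d0 : Fin 1 → ℕ := fun _ => 0
  let dS : Fin 1 ⊕ Fin 1 → ℕ := fun _ => 0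
  have gp1 : GrMap dS d0 p1 := fun e f hf b s hs => hf (Sum.inl b) s hs
  have gp2 : GrMap dS d0 p2 := fun e f hf b s hs => hf (Sum.inr b) s hs
  have gi1 : GrMap d0 dS i1 := by
    intro e f hf b s hs
    rcases b with b | b
    · rw [i1l] at hs; exact hf b s hs
    · rw [i1r] at hs; simp at hs
  have gi2 : GrMap d0 dS i2 := by
    intro e f hf b s hs
    rcases b with b | b
    · rw [i2l] at hs; simp at hs
    · rw [i2r] at hs; exact hf b s hs
  let D : Submodule S (Fin 1 ⊕ Fin 1 →₀ S) :=
    (MIs k U hU).comap p1 ⊓ (MIs k V hV).comap p2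
  have hD : ∀ x, x ∈ D ↔ p1 x ∈ MIs k U hU ∧ p2 x ∈ MIs k V hV := fun x => Iff.rfl
  have key1 : GSES d0 dS d0 (MIs k U hU) D (MIs k V hV) i1 p2 := by
    refine ⟨gi1, gp2, ?_, ?_, ?_, ?_, ?_, ?_⟩
    · intro x hx
      rw [hD, p1i1, p2i1]
      exact ⟨hx, Submodule.zero_mem _⟩
    · intro x hx
      exact hx.2
    · intro x _ h
      rw [← p1i1 x, h, map_zero]
    · intro x _
      exact p2i1 x
    · intro e x hx hxe h
      refine ⟨p1 x, hx.1, gp1 _ _ hxe, ?_⟩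
      conv_rhs => rw [dec x, h, map_zero, add_zero]
    · intro e x hx hxe
      refine ⟨i2 x, ?_, gi2 _ _ hxe, p2i2 x⟩
      rw [hD, p1i2, p2i2]
      exact ⟨Submodule.zero_mem _, hx⟩
  have hDreg := horseshoe key1 h1 h2
  have key2 : GSES d0 dS d0 (MIs k (U ∩ V) hW) D (MIs k (U ∪ V) (hU.union hV))
      (i1 - i2) (p1 + p2) := by
    refine ⟨?_, ?_, ?_, ?_, ?_, ?_, ?_, ?_⟩
    · intro e x hx
      exact AddSubgroup.sub_mem _ (gi1 _ _ hx) (gi2 _ _ hx)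
    · intro e x hx
      exact AddSubgroup.add_mem _ (gp1 _ _ hx) (gp2 _ _ hx)
    · intro x hx
      rw [hD, LinearMap.sub_apply, map_sub, map_sub, p1i1, p1i2, p2i1, p2i2, sub_zero, zero_sub]
      exact ⟨fun s hs => (hx s hs).1, Submodule.neg_mem _ fun s hs => (hx s hs).2⟩
    · intro x hx
      exact Submodule.add_mem _ (fun s hs => Or.inl (hx.1 s hs)) (fun s hs => Or.inr (hx.2 s hs))
    · intro x _ h
      have := congrArg p1 h
      rwa [LinearMap.sub_apply, map_sub, p1i1, p1i2, sub_zero, map_zero] at this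
    · intro x _
      rw [LinearMap.sub_apply, LinearMap.add_apply, map_sub, map_sub, p1i1, p1i2, p2i1, p2i2]
      abel
    · intro e x hx hxe h
      have h' : p2 x = - p1 x := eq_neg_of_add_eq_zero_right h
      refine ⟨p1 x, fun s hs => ⟨hx.1 s hs, hx.2 s ?_⟩, gp1 _ _ hxe, ?_⟩
      · rw [h', Finsupp.neg_apply, coeff_neg]; exact neg_ne_zero.2 hs
      · conv_rhs => rw [dec x, h', map_neg]
        rw [LinearMap.sub_apply, sub_eq_add_neg]
    · intro e x hx hxe
      let a : S := ∑ s ∈ (x 0).support with s ∈ U, monomial s (coeff s (x 0))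
      have ha : ∀ s, coeff s a = if s ∈ U then coeff s (x 0) else 0 := by
        intro s
        rw [coeff_sum]
        simp only [coeff_monomial]
        rw [Finset.sum_ite_eq']
        by_cases h1 : s ∈ U <;> by_cases h2 : coeff s (x 0) = 0 <;> simp [h1, h2]
      let y : Fin 1 →₀ S := Finsupp.single 0 a
      have hy : ∀ s, coeff s (y 0) = if s ∈ U then coeff s (x 0) else 0 := by
        intro s
        rw [← ha, Finsupp.single_eq_same]
      have hye : y ∈ Fpc d0 e := by
        intro b s hs
        rw [Subsingleton.elim b 0, hy] at hs
        split_ifs at hs with h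
        · exact hxe 0 s hs
        · simp at hs
      refine ⟨i1 y + i2 (x - y), ?_, ?_, ?_⟩
      · rw [hD, map_add, map_add, p1i1, p1i2, p2i1, p2i2, add_zero, zero_add]
        refine ⟨fun s hs => ?_, fun s hs => ?_⟩
        · rw [hy] at hs
          split_ifs at hs with h
          · exact h
          · simp at hs
        · rw [Finsupp.sub_apply, coeff_sub, hy] at hs
          split_ifs at hs with h
          · simp at hs
          · rw [sub_zero] at hs
            exact (hx s hs).resolve_left h
      · exact AddSubgroup.add_mem _ (gi1 _ _ hye) (gi2 _ _ (AddSubgroup.sub_mem _ hxe hye))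
      · rw [LinearMap.add_apply, map_add, map_add, p1i1, p1i2, p2i1, p2i2]
        abel
  refine regLE_quot key2 p1 gp1 ?_ hDreg h3
  intro x hx h
  have h' : p2 x = - p1 x := eq_neg_of_add_eq_zero_right h
  refine ⟨fun s hs => ⟨hx.1 s hs, hx.2 s ?_⟩, ?_⟩
  · rw [h', Finsupp.neg_apply, coeff_neg]; exact neg_ne_zero.2 hs
  · conv_rhs => rw [dec x, h', map_neg]
    rw [LinearMap.sub_apply, sub_eq_add_neg]

/-- Coarse bound: an upper set determined by exponents `≤ q`, for which all exponents `≤ q`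
outside have degree `≤ B`. -/
theorem regU_coarse (N : ℕ) : ∀ (q : σ →₀ ℕ) (_ : q.degree = N) (U : Set (σ →₀ ℕ))
    (_ : IsUpperSet U) (_ : ∀ a ∈ U, a ⊓ q ∈ U) (B : ℕ)
    (_ : ∀ a, a ∉ U → a ≤ q → a.degree ≤ B), RegU k U (B + 1) := by
  classical
  induction N using Nat.strong_induction_on with
  | _ N ih =>
  intro q hqN U hU hq B hB
  by_cases h0 : q = 0
  · subst h0
    by_cases hne : (0 : σ →₀ ℕ) ∈ U
    · have : U = Set.univ := Set.eq_univ_of_forall fun a => hU (zero_le) hne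
      rw [this]; exact regU_univ _
    · have : U = ∅ := by
        apply Set.eq_empty_of_forall_notMem
        intro a ha
        have := hq a ha
        rw [inf_eq_right.2 (zero_le)] at this
        exact hne this
      rw [this]; exact regU_empty _
  · obtain ⟨i, hi⟩ := Finsupp.ne_iff.1 h0
    rw [Finsupp.zero_apply] at hi
    have hqi : Finsupp.single i 1 ≤ q := by
      rw [Finsupp.single_le_iff]; omega
    let x : σ →₀ ℕ := Finsupp.single i 1
    have hx1 : x.degree = 1 := by simp [x]
    have hxi : ∀ a : σ →₀ ℕ, x ≤ a ↔ a i ≠ 0 := by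
      intro a; rw [Finsupp.single_le_iff]; omega
    -- slice
    let U0 : Set (σ →₀ ℕ) := {a | a.erase i ∈ U}
    have hele : ∀ a : σ →₀ ℕ, a.erase i ≤ a := by
      intro a j
      rw [Finsupp.erase_apply]; split_ifs <;> simp
    have hemono : ∀ a b : σ →₀ ℕ, a ≤ b → a.erase i ≤ b.erase i := by
      intro a b hab j
      rw [Finsupp.erase_apply, Finsupp.erase_apply]; split_ifs
      · exact le_rfl
      · exact hab j
    have hU0 : IsUpperSet U0 := fun a b hab ha => hU (hemono a b hab) ha
    have hlt : (q.erase i).degree < N := by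
      have h1 : q.erase i + Finsupp.single i (q i) = q := Finsupp.erase_add_single i q
      have h2 := congrArg Finsupp.degree h1
      rw [map_add, Finsupp.degree_single] at h2
      omega
    have r0 : RegU k U0 (B + 1) := by
      refine ih _ hlt (q.erase i) rfl U0 hU0 ?_ B ?_
      · intro a ha
        have h1 := hq _ ha
        refine hU ?_ h1
        intro j
        simp only [Finsupp.inf_apply, Finsupp.erase_apply]
        split_ifs <;> simp
      · intro a ha haq
        have hae : a.erase i = a := by
          ext j
          rw [Finsupp.erase_apply]
          split_ifs with hj
          · have := haq i
            rw [Finsupp.erase_same] at this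
            subst hj; omega
          · rfl
        apply hB
        · intro h; apply ha; change a.erase i ∈ U; rwa [hae]
        · exact haq.trans (hele q)
    -- colon
    let U1 : Set (σ →₀ ℕ) := {a | a + x ∈ U}
    have hU1 : IsUpperSet U1 := fun a b hab ha => hU (add_le_add_left hab x) ha
    have hlt1 : (q - x).degree < N := by
      have h1 : q - x + x = q := tsub_add_cancel_of_le hqi
      have h2 := congrArg Finsupp.degree h1
      rw [map_add, hx1] at h2
      omega
    have r1 : RegU k U1 B := by
      by_cases hBz : B = 0
      · subst hBz
        have : U1 = Set.univ := by
          apply Set.eq_univ_of_forall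
          intro a
          change a + x ∈ U
          have hxU : x ∈ U := by
            by_contra h
            have := hB x h hqi
            omega
          exact hU (by simp) hxU
        rw [this]; exact regU_univ _
      · obtain ⟨B, rfl⟩ := Nat.exists_eq_succ_of_ne_zero hBz
        refine ih _ hlt1 (q - x) rfl U1 hU1 ?_ B ?_
        · intro a ha
          have h1 := hq _ ha
          refine hU ?_ h1
          intro j
          have hj := hqi j
          simp only [Finsupp.inf_apply, Finsupp.add_apply, Finsupp.tsub_apply]
          change x j ≤ q j at hj
          omega
        · intro a ha haq
          have h1 := hB (a + x) ha (by
            calc a + x ≤ q - x + x := add_le_add_left haq x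
              _ = q := tsub_add_cancel_of_le hqi)
          rw [map_add, hx1] at h1
          omega
    have hers : ∀ a : σ →₀ ℕ, (a - x).erase i = a.erase i := by
      intro a
      ext j
      rw [Finsupp.erase_apply, Finsupp.erase_apply]
      split_ifs with hj
      · rfl
      · simp [x, Finsupp.single_apply, Ne.symm hj]
    have hUeq : U = U0 ∪ {a | x ≤ a ∧ a - x ∈ U1} := by
      ext a
      constructor
      · intro ha
        by_cases hai : a i = 0
        · left
          change a.erase i ∈ U
          have : a.erase i = a := by
            ext j
            rw [Finsupp.erase_apply]
            split_ifs with hj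
            · rw [hj, hai]
            · rfl
          rwa [this]
        · right
          have hxa := (hxi a).2 hai
          refine ⟨hxa, ?_⟩
          change a - x + x ∈ U
          rwa [tsub_add_cancel_of_le hxa]
      · rintro (h | ⟨h1, h2⟩)
        · exact hU (hele a) h
        · change a - x + x ∈ U at h2
          rwa [tsub_add_cancel_of_le h1] at h2
    have hcap : U0 ∩ {a | x ≤ a ∧ a - x ∈ U1} = {a | x ≤ a ∧ a - x ∈ U0} := by
      ext a
      constructor
      · rintro ⟨h1, h2, _⟩
        refine ⟨h2, ?_⟩
        change (a - x).erase i ∈ U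
        rw [hers]; exact h1
      · rintro ⟨h1, h2⟩
        change (a - x).erase i ∈ U at h2
        rw [hers] at h2
        refine ⟨h2, h1, ?_⟩
        change a - x + x ∈ U
        rw [tsub_add_cancel_of_le h1]
        exact hU (hele a) h2
    rw [hUeq]
    refine r0.union ?_ ?_
    · have := r1.shift x
      rwa [hx1] at this
    · rw [hcap]
      have := r0.shift x
      rwa [hx1] at this

end MonomialIdeals



section Conversion

variable {k : Type} [Field k] {σ : Type}

/-- A state in the construction of a resolution. -/
structure St (k : Type) [Field k] (σ : Type) where
  r : ℕ
  dg : Fin r → ℕ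
  N : Submodule (MvPolynomial σ k) (Fin r →₀ MvPolynomial σ k)
  R : ℕ
  l : ℕ
  hom : IsHom dg N
  reg : RegLE l (Fin r) dg N R

theorem St.next (s : St k σ) : ∃ (s' : St k σ)
    (φ : (Fin s'.r →₀ MvPolynomial σ k) →ₗ[MvPolynomial σ k] (Fin s.r →₀ MvPolynomial σ k)),
    GrMap s'.dg s.dg φ ∧ LinearMap.range φ = s.N ∧ s'.N = LinearMap.ker φ ∧ s'.R = s.R + 1 ∧
      ∀ b, s'.dg b ≤ s.R := by
  obtain ⟨r, dg, φ, h1, h2, h3, h4⟩ := s.reg.step_fin s.hom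
  exact ⟨⟨r, dg, LinearMap.ker φ, s.R + 1, s.l, isHom_ker h2, h4⟩, φ, h2, h3, rfl, rfl, h1⟩

theorem isHomogeneous_of_coeff {p : MvPolynomial σ k} {m : ℕ}
    (h : ∀ s, coeff s p ≠ 0 → s.degree = m) : p.IsHomogeneous m := by
  intro s hs
  rw [← h s hs, Finsupp.degree_eq_weight_one]
  rfl

theorem coeff_of_isHomogeneous {p : MvPolynomial σ k} {m : ℕ}
    (h : p.IsHomogeneous m) : ∀ s, coeff s p ≠ 0 → s.degree = m := by
  intro s hs
  rw [← h hs, Finsupp.degree_eq_weight_one]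
  rfl

theorem exists_res {U : Set (σ →₀ ℕ)} {R : ℕ} (h : RegU k U R) (I : Ideal (MvPolynomial σ k))
    (hI : ∀ f, f ∈ I ↔ ∀ s, coeff s f ≠ 0 → s ∈ U) :
    ∃ F : GradedFreeRes k σ I, ∀ i b, F.deg i b ≤ R + i := by
  classical
  obtain ⟨hU, l, h⟩ := h
  choose nx φ hφ1 hφ2 hφ3 hφ4 hφ5 using (St.next (k := k) (σ := σ))
  let s0 : St k σ := ⟨1, fun _ => 0, MIs k U hU, R, l, isHom_MIs U hU, h⟩
  let sq : ℕ → St k σ := fun i => Nat.rec s0 (fun _ s => nx s) i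
  have hsq : ∀ i, sq (i + 1) = nx (sq i) := fun i => rfl
  have hR : ∀ i, (sq i).R = R + i := by
    intro i
    induction i with
    | zero => rfl
    | succ i ih => rw [hsq, hφ4, ih]; omega
  let ev : (Fin 1 →₀ MvPolynomial σ k) →ₗ[MvPolynomial σ k] MvPolynomial σ k := Finsupp.lapply 0
  let φ0 : (Fin (nx s0).r →₀ MvPolynomial σ k) →ₗ[MvPolynomial σ k] (Fin 1 →₀ MvPolynomial σ k) :=
    φ s0
  have hev : ∀ x, ev x = 0 → x = 0 := by
    intro x hx
    apply fin1_ext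
    intro s
    change coeff s (ev x) = _
    rw [hx]; simp
  refine ⟨⟨fun i => (sq (i + 1)).r, fun i => (sq (i + 1)).dg, ev.comp φ0,
    fun i => φ (sq (i + 1)), ?_, ?_, ?_, ?_, ?_⟩, ?_⟩
  · ext f
    rw [hI]
    constructor
    · rintro ⟨x, rfl⟩
      have : φ0 x ∈ MIs k U hU := by
        have h := hφ2 s0
        change LinearMap.range φ0 = MIs k U hU at h
        rw [← h]; exact ⟨x, rfl⟩
      exact this
    · intro hf
      have : (Finsupp.single 0 f : Fin 1 →₀ MvPolynomial σ k) ∈ LinearMap.range φ0 := by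
        have h := hφ2 s0
        change LinearMap.range φ0 = MIs k U hU at h
        rw [h]
        intro s hs
        rw [Finsupp.single_eq_same] at hs
        exact hf s hs
      obtain ⟨x, hx⟩ := this
      refine ⟨x, ?_⟩
      rw [LinearMap.comp_apply, hx]
      exact Finsupp.single_eq_same
  · have h1 := hφ2 (sq 1)
    have h2 := hφ3 (sq 0)
    refine Eq.trans h1 (Eq.trans h2 ?_)
    ext x
    constructor
    · intro hx
      change ev (φ0 x) = 0
      have : φ0 x = 0 := hx
      rw [this, map_zero]
    · intro hx
      exact hev _ hx
  · intro i
    exact (hφ2 (sq (i + 2))).trans (hφ3 (sq (i + 1)))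
  · intro b
    apply isHomogeneous_of_coeff
    intro s hs
    have := hφ1 s0 _ _ (basis_mem_Fpc _ b) 0 s hs
    exact this
  · intro i b c
    have H := hφ1 (sq (i + 1)) _ _ (basis_mem_Fpc _ b) c
    by_cases h0 : (φ (sq (i + 1)) (Finsupp.single b 1)) c = 0
    · left; exact h0
    · right
      obtain ⟨s, hs⟩ := MvPolynomial.ne_zero_iff.1 h0
      refine ⟨s.degree, ?_, ?_⟩
      · have := H s hs
        change (nx (sq (i + 1))).dg b = (sq (i + 1)).dg c + s.degree
        omega
      · apply isHomogeneous_of_coeff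
        intro s' hs'
        have h1 := H s hs
        have h2 := H s' hs'
        omega
  · intro i b
    have := hφ5 (sq i) b
    rw [hR] at this
    exact this

end Conversion



section LowerBound

variable {k : Type} [Field k] {n : ℕ}

/-- The ideal generated by the first `j` variables. -/
def xi (k : Type) [Field k] (n j : ℕ) : Ideal (MvPolynomial (Fin n) k) :=
  Ideal.span (X '' {i : Fin n | i.val < j})

theorem mem_xi {j : ℕ} {p : MvPolynomial (Fin n) k} :
    p ∈ xi k n j ↔ ∀ s, coeff s p ≠ 0 → ∃ i : Fin n, i.val < j ∧ s i ≠ 0 := by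
  rw [xi, mem_ideal_span_X_image]
  simp only [mem_support_iff, Set.mem_ofPred_eq]

theorem xi_zero : xi k n 0 = ⊥ := by
  simp [xi]

theorem xi_succ {j : ℕ} (hj : j < n) :
    xi k n (j + 1) = xi k n j ⊔ Ideal.span {X ⟨j, hj⟩} := by
  rw [xi, xi, ← Ideal.span_union]
  congr 1
  ext p
  constructor
  · rintro ⟨i, hi, rfl⟩
    simp only [Set.mem_ofPred_eq] at hi
    by_cases h : i.val < j
    · left; exact ⟨i, h, rfl⟩
    · right
      have : i = ⟨j, hj⟩ := Fin.ext (by simp only; omega)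
      rw [this]; rfl
  · rintro (⟨i, hi, rfl⟩ | h)
    · exact ⟨i, Nat.lt_succ_of_lt hi, rfl⟩
    · rw [h]; exact ⟨⟨j, hj⟩, by simp, rfl⟩

theorem mem_smul_top {κ : Type} {I : Ideal (MvPolynomial (Fin n) k)}
    {f : κ →₀ MvPolynomial (Fin n) k} :
    f ∈ I • (⊤ : Submodule (MvPolynomial (Fin n) k) (κ →₀ MvPolynomial (Fin n) k)) ↔
      ∀ b, f b ∈ I := by
  constructor
  · intro h b
    induction h using Submodule.smul_induction_on' with
    | smul r hr x hx => exact I.mul_mem_right _ hr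
    | add x hx y hy h1 h2 => exact I.add_mem h1 h2
  · intro h
    have h1 : f = f.sum fun b p => p • (Finsupp.single b 1 : κ →₀ MvPolynomial (Fin n) k) := by
      conv_lhs => rw [← Finsupp.sum_single f]
      simp
    rw [h1]
    exact Submodule.sum_mem _ fun b _ => Submodule.smul_mem_smul (h b) trivial

theorem free_regular {κ : Type} {j : ℕ} (hj : j < n) {f : κ →₀ MvPolynomial (Fin n) k}
    (h : (X ⟨j, hj⟩ : MvPolynomial (Fin n) k) • f ∈ xi k n j •
      (⊤ : Submodule (MvPolynomial (Fin n) k) (κ →₀ MvPolynomial (Fin n) k))) :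
    f ∈ xi k n j • (⊤ : Submodule (MvPolynomial (Fin n) k) (κ →₀ MvPolynomial (Fin n) k)) := by
  rw [mem_smul_top] at h ⊢
  intro b
  have hb := h b
  rw [mem_xi] at hb ⊢
  intro s hs
  obtain ⟨i, hi, hne⟩ := hb (Finsupp.single ⟨j, hj⟩ 1 + s) (by
    rw [Finsupp.smul_apply, smul_eq_mul, coeff_X_mul]; exact hs)
  refine ⟨i, hi, ?_⟩
  have : (⟨j, hj⟩ : Fin n) ≠ i := by
    rintro rfl
    simp at hi
  rwa [Finsupp.add_apply, Finsupp.single_apply, if_neg this, zero_add] at hne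

/-- The first `j` variables form a weakly regular sequence on `M`. -/
def RegSq {H : Type} [AddCommGroup H] [Module (MvPolynomial (Fin n) k) H] (j : ℕ)
    (M : Submodule (MvPolynomial (Fin n) k) H) : Prop :=
  ∀ l (hl : l < n), l < j → ∀ m ∈ M, (X ⟨l, hl⟩ : MvPolynomial (Fin n) k) • m ∈ xi k n l • M →
    m ∈ xi k n l • M

theorem mem_xi_succ_smul {H : Type} [AddCommGroup H] [Module (MvPolynomial (Fin n) k) H] {j : ℕ}
    (hj : j < n) {M : Submodule (MvPolynomial (Fin n) k) H} {x : H} :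
    x ∈ xi k n (j + 1) • M ↔ ∃ c ∈ xi k n j • M, ∃ d ∈ M,
      c + (X ⟨j, hj⟩ : MvPolynomial (Fin n) k) • d = x := by
  rw [xi_succ hj, Submodule.sup_smul, Submodule.ideal_span_singleton_smul, Submodule.mem_sup]
  constructor
  · rintro ⟨c, hc, y, hy, rfl⟩
    obtain ⟨d, hd, rfl⟩ := (Submodule.mem_smul_pointwise_iff_exists _ _ _).1 hy
    exact ⟨c, hc, d, hd, rfl⟩
  · rintro ⟨c, hc, d, hd, rfl⟩
    exact ⟨c, hc, _, Submodule.smul_mem_pointwise_smul _ _ _ hd, rfl⟩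

theorem mem_smul_range {H : Type} [AddCommGroup H] [Module (MvPolynomial (Fin n) k) H]
    {G : Type} [AddCommGroup G] [Module (MvPolynomial (Fin n) k) G]
    {I : Ideal (MvPolynomial (Fin n) k)} {D : G →ₗ[MvPolynomial (Fin n) k] H} {y : H} :
    y ∈ I • LinearMap.range D ↔ ∃ x ∈ I • (⊤ : Submodule (MvPolynomial (Fin n) k) G), D x = y := by
  rw [← Submodule.map_top, ← Submodule.map_smul'', Submodule.mem_map]

theorem lemA {H : Type} [AddCommGroup H] [Module (MvPolynomial (Fin n) k) H]
    {G : Type} [AddCommGroup G] [Module (MvPolynomial (Fin n) k) G]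
    {D : G →ₗ[MvPolynomial (Fin n) k] H} {j : ℕ} (h : RegSq j (LinearMap.range D)) (l : ℕ)
    (hln : l ≤ n) (hlj : l ≤ j) : ∀ f ∈ xi k n l • (⊤ : Submodule (MvPolynomial (Fin n) k) G),
    D f = 0 → f ∈ xi k n l • LinearMap.ker D := by
  induction l with
  | zero =>
    intro f hf _
    rw [xi_zero, Submodule.bot_smul, Submodule.mem_bot] at hf
    rw [hf]; exact Submodule.zero_mem _
  | succ l ih =>
    intro f hf hD
    have hl : l < n := hln
    obtain ⟨g, hg, y, -, rfl⟩ := (mem_xi_succ_smul hl).1 hf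
    have h1 : (X ⟨l, hl⟩ : MvPolynomial (Fin n) k) • D y = D (-g) := by
      rw [map_add, map_smul] at hD
      rw [map_neg]
      exact eq_neg_of_add_eq_zero_right hD
    have h2 := h l hl hlj (D y) ⟨y, rfl⟩ (by
      rw [h1, mem_smul_range]
      exact ⟨-g, Submodule.neg_mem _ hg, rfl⟩)
    obtain ⟨y', hy', hyy⟩ := mem_smul_range.1 h2
    rw [mem_xi_succ_smul hl]
    refine ⟨g + (X ⟨l, hl⟩ : MvPolynomial (Fin n) k) • y', ?_, y - y', ?_, ?_⟩
    · apply ih hl.le (by omega)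
      · exact Submodule.add_mem _ hg (Submodule.smul_mem _ _ hy')
      · rw [map_add, map_smul, hyy, ← map_smul, ← map_add, hD]
    · rw [LinearMap.mem_ker, map_sub, hyy, sub_self]
    · rw [smul_sub]; abel

theorem lemB {H : Type} [AddCommGroup H] [Module (MvPolynomial (Fin n) k) H]
    {κ : Type} {D : (κ →₀ MvPolynomial (Fin n) k) →ₗ[MvPolynomial (Fin n) k] H} {j : ℕ}
    (h : RegSq j (LinearMap.range D)) : RegSq (j + 1) (LinearMap.ker D) := by
  intro l hl hlj m hm hX
  refine lemA h l hl.le (by omega) m ?_ hm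
  exact free_regular hl (Submodule.smul_mono le_rfl le_top hX)

/-- The inductive package. -/
def Qp {ι : Type} (j : ℕ) (dH : ι → ℕ)
    (M : Submodule (MvPolynomial (Fin n) k) (ι →₀ MvPolynomial (Fin n) k)) (e : ℕ) : Prop :=
  RegSq j M ∧ ∃ a ∈ M, a ∈ Fpc dH e ∧ a ∉ xi k n j • M ∧
    ∀ i, (X i : MvPolynomial (Fin n) k) • a ∈ xi k n j • M

theorem cmp_mem_xi {κ : Type} {dG : κ → ℕ} {e j : ℕ} {f : κ →₀ MvPolynomial (Fin n) k}
    (hf : f ∈ xi k n j • (⊤ : Submodule (MvPolynomial (Fin n) k) (κ →₀ MvPolynomial (Fin n) k))) :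
    cmp dG e f ∈ xi k n j •
      (⊤ : Submodule (MvPolynomial (Fin n) k) (κ →₀ MvPolynomial (Fin n) k)) := by
  rw [mem_smul_top] at hf ⊢
  intro b
  have := hf b
  rw [mem_xi] at this ⊢
  intro s hs
  apply this s
  rw [coeff_cmp] at hs
  split_ifs at hs
  · exact hs
  · simp at hs

theorem X_smul_mem_Fpc {κ : Type} {dG : κ → ℕ} {e : ℕ} {f : κ →₀ MvPolynomial (Fin n) k}
    (hf : f ∈ Fpc dG e) (i : Fin n) :
    (X i : MvPolynomial (Fin n) k) • f ∈ Fpc dG (e + 1) := by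
  classical
  apply smul_mem_Fpc hf
  intro s hs
  rw [coeff_X] at hs
  split_ifs at hs with h
  · rw [← h, Finsupp.degree_single]; omega
  · simp at hs

theorem Qp.step {ι κ : Type} {j : ℕ} (hj : j < n) {dH : ι → ℕ} {dG : κ → ℕ}
    {D : (κ →₀ MvPolynomial (Fin n) k) →ₗ[MvPolynomial (Fin n) k] (ι →₀ MvPolynomial (Fin n) k)}
    {e : ℕ} (hD : GrMap dG dH D) (h : Qp j dH (LinearMap.range D) e) :
    Qp (j + 1) dG (LinearMap.ker D) (e + 1) := by
  obtain ⟨hreg, a, ⟨a0, ha0⟩, hae, hnot, hX⟩ := h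
  refine ⟨lemB hreg, ?_⟩
  let a1 := cmp dG e a0
  have ha1 : D a1 = a := by
    rw [← cmp_map hD, ha0, cmp_of_mem hae]
  have ha1e : a1 ∈ Fpc dG e := cmp_mem _ _ _
  obtain ⟨f0, hf0, hDf0⟩ := mem_smul_range.1 (hX ⟨j, hj⟩)
  let f := cmp dG (e + 1) f0
  have hf : f ∈ xi k n j • (⊤ : Submodule (MvPolynomial (Fin n) k) (κ →₀ MvPolynomial (Fin n) k)) :=
    cmp_mem_xi hf0
  have hDf : D f = (X ⟨j, hj⟩ : MvPolynomial (Fin n) k) • a := by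
    rw [← cmp_map hD, hDf0, cmp_of_mem (X_smul_mem_Fpc hae _)]
  have hfe : f ∈ Fpc dG (e + 1) := cmp_mem _ _ _
  have hker : D ((X ⟨j, hj⟩ : MvPolynomial (Fin n) k) • a1 - f) = 0 := by
    rw [map_sub, map_smul, ha1, hDf, sub_self]
  refine ⟨(X ⟨j, hj⟩ : MvPolynomial (Fin n) k) • a1 - f, hker,
    AddSubgroup.sub_mem _ (X_smul_mem_Fpc ha1e _) hfe, ?_, ?_⟩
  · intro hb
    obtain ⟨c, hc, d, hd, hcd⟩ := (mem_xi_succ_smul hj).1 hb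
    apply hnot
    rw [mem_smul_range]
    refine ⟨a1 - d, ?_, ?_⟩
    · apply free_regular hj
      have : (X ⟨j, hj⟩ : MvPolynomial (Fin n) k) • (a1 - d) = f + c := by
        rw [smul_sub]
        have h2 : (X ⟨j, hj⟩ : MvPolynomial (Fin n) k) • a1 =
          c + (X ⟨j, hj⟩ : MvPolynomial (Fin n) k) • d + f := by rw [hcd]; abel
        rw [h2]; abel
      rw [this]
      exact Submodule.add_mem _ hf (Submodule.smul_mono le_rfl le_top hc)
    · rw [map_sub, ha1, LinearMap.mem_ker.1 hd, sub_zero]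
  · intro i
    obtain ⟨g, hg, hDg⟩ := mem_smul_range.1 (hX i)
    rw [mem_xi_succ_smul hj]
    have hd : D ((X i : MvPolynomial (Fin n) k) • a1 - g) = 0 := by
      rw [map_sub, map_smul, ha1, hDg, sub_self]
    have heq : (X ⟨j, hj⟩ : MvPolynomial (Fin n) k) • g - (X i : MvPolynomial (Fin n) k) • f +
        (X ⟨j, hj⟩ : MvPolynomial (Fin n) k) • ((X i : MvPolynomial (Fin n) k) • a1 - g) =
        (X i : MvPolynomial (Fin n) k) • ((X ⟨j, hj⟩ : MvPolynomial (Fin n) k) • a1 - f) := by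
      rw [smul_sub, smul_sub, smul_comm (X i : MvPolynomial (Fin n) k)]
      abel
    refine ⟨_, ?_, _, hd, heq⟩
    apply lemA hreg j hj.le le_rfl
    · exact Submodule.sub_mem _ (Submodule.smul_mem _ _ hg) (Submodule.smul_mem _ _ hf)
    · have := congrArg D heq
      rw [map_add, map_smul, map_smul, hker, hd, smul_zero, smul_zero, add_zero] at this
      exact this

theorem Qp.final {ι κ : Type} {dH : ι → ℕ} {dG : κ → ℕ}
    {D : (κ →₀ MvPolynomial (Fin n) k) →ₗ[MvPolynomial (Fin n) k] (ι →₀ MvPolynomial (Fin n) k)}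
    {e : ℕ} (hD : GrMap dG dH D) (h : Qp n dH (LinearMap.range D) e) : ∃ b, dG b = e := by
  obtain ⟨-, a, ⟨a0, ha0⟩, hae, hnot, -⟩ := h
  by_contra hno
  push Not at hno
  apply hnot
  rw [mem_smul_range]
  refine ⟨cmp dG e a0, ?_, ?_⟩
  · rw [mem_smul_top]
    intro b
    rw [mem_xi]
    intro s hs
    have h1 := cmp_mem dG e a0 b s hs
    have h2 : s ≠ 0 := by
      rintro rfl
      rw [map_zero, zero_add] at h1
      exact hno b h1
    obtain ⟨i, hi⟩ := Finsupp.ne_iff.1 h2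
    exact ⟨i, i.2, hi⟩
  · rw [← cmp_map hD, ha0, cmp_of_mem hae]

theorem lower_bound (hn : 2 ≤ n) {U : Set (Fin n →₀ ℕ)} {I : Ideal (MvPolynomial (Fin n) k)}
    (hI : ∀ f, f ∈ I ↔ ∀ s, coeff s f ≠ 0 → s ∈ U) (u : Fin n →₀ ℕ) (hu : u ∉ U)
    (hu1 : ∀ i, u + Finsupp.single i 1 ∈ U) (F : GradedFreeRes k (Fin n) I) :
    ∃ b, F.deg (n - 1) b = u.degree + n := by
  classical
  have hI1 : ∀ s, (monomial s (1 : k)) ∈ I ↔ s ∈ U := by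
    intro s
    rw [hI]
    constructor
    · intro h; exact h s (by simp)
    · intro h s' hs'
      rw [coeff_monomial] at hs'
      split_ifs at hs' with h0
      · rwa [← h0]
      · simp at hs'
  let S := MvPolynomial (Fin n) k
  let D0 : (Fin (F.rk 0) →₀ S) →ₗ[S] (Fin 1 →₀ S) := (Finsupp.lsingle 0).comp F.aug
  have hD0a : ∀ x, D0 x = Finsupp.single 0 (F.aug x) := fun x => rfl
  have hD0 : GrMap (F.deg 0) (fun _ => 0) D0 := by
    apply GrMap.of_basis
    intro b
    rw [hD0a]
    apply single_mem_Fpc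
    intro s hs
    rw [coeff_of_isHomogeneous (F.aug_graded b) s hs, add_zero]
  have hDi : ∀ i, GrMap (F.deg (i + 1)) (F.deg i) (F.d i) := by
    intro i
    apply GrMap.of_basis
    intro b c s hs
    rcases F.d_graded i b c with h | ⟨m, hm, h⟩
    · rw [h] at hs; simp at hs
    · rw [coeff_of_isHomogeneous h s hs, hm, add_comm]
  have hrange : ∀ p, p ∈ I → (Finsupp.single 0 p : Fin 1 →₀ S) ∈ LinearMap.range D0 := by
    intro p hp
    rw [← F.aug_range] at hp
    obtain ⟨x, rfl⟩ := hp
    exact ⟨x, rfl⟩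
  have hrange' : ∀ y ∈ LinearMap.range D0, y 0 ∈ I := by
    rintro y ⟨x, rfl⟩
    rw [hD0a, Finsupp.single_eq_same]
    apply F.aug_range.le
    exact ⟨x, rfl⟩
  have hn0 : 0 < n := by omega
  have hXm : ∀ (i : Fin n) (s : Fin n →₀ ℕ),
      (X i : S) * monomial s 1 = monomial (s + Finsupp.single i 1) 1 := by
    intro i s
    rw [X, monomial_mul, one_mul, add_comm]
  have q1 : Qp 1 (fun _ => 0) (LinearMap.range D0) (u.degree + 1) := by
    refine ⟨?_, Finsupp.single 0 (monomial (u + Finsupp.single ⟨0, hn0⟩ 1) 1),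
      hrange _ ((hI1 _).2 (hu1 _)), ?_, ?_, ?_⟩
    · intro l hl hl1 m hm h
      obtain rfl : l = 0 := by omega
      rw [xi_zero, Submodule.bot_smul, Submodule.mem_bot] at h
      have : m = 0 := (smul_eq_zero.1 h).resolve_left (X_ne_zero _)
      rw [this]; exact Submodule.zero_mem _
    · have := monomial_single_mem (fun _ : Fin 1 => 0) 0 (u + Finsupp.single ⟨0, hn0⟩ 1) (1 : k)
      rwa [map_add, Finsupp.degree_single] at this
    · intro h
      obtain ⟨c, hc, d, hd, hcd⟩ := (mem_xi_succ_smul hn0).1 h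
      rw [xi_zero, Submodule.bot_smul, Submodule.mem_bot] at hc
      rw [hc, zero_add] at hcd
      have h1 := DFunLike.congr_fun hcd 0
      rw [Finsupp.smul_apply, Finsupp.single_eq_same, smul_eq_mul, ← hXm] at h1
      have h2 := mul_left_cancel₀ (X_ne_zero _) h1
      have h3 := hrange' d hd
      rw [h2, hI1] at h3
      exact hu h3
    · intro i
      rw [mem_xi_succ_smul hn0]
      refine ⟨0, Submodule.zero_mem _, _, hrange _ ((hI1 _).2 (hu1 i)), ?_⟩
      rw [zero_add, Finsupp.smul_single, Finsupp.smul_single, smul_eq_mul, smul_eq_mul, hXm, hXm,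
        add_right_comm]
  have hker : LinearMap.ker D0 = LinearMap.range (F.d 0) := by
    rw [F.exact_zero]
    ext x
    rw [LinearMap.mem_ker, LinearMap.mem_ker, hD0a, Finsupp.single_eq_zero]
  have chain : ∀ i, i + 2 ≤ n → Qp (i + 2) (F.deg i) (LinearMap.range (F.d i)) (u.degree + 2 + i) := by
    intro i
    induction i with
    | zero =>
      intro _
      have := q1.step (by omega) hD0
      rwa [hker] at this
    | succ i ih =>
      intro hi
      have := (ih (by omega)).step (by omega) (hDi i)
      rwa [← F.exact_succ] at this
  obtain ⟨m, rfl⟩ : ∃ m, n = m + 2 := ⟨n - 2, by omega⟩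
  obtain ⟨b, hb⟩ := (chain m le_rfl).final (hDi m)
  exact ⟨b, by rw [show u.degree + (m + 2) = u.degree + 2 + m by omega]; exact hb⟩

theorem reg_eq (hn : 2 ≤ n) {U : Set (Fin n →₀ ℕ)} {I : Ideal (MvPolynomial (Fin n) k)}
    (hI : ∀ f, f ∈ I ↔ ∀ s, coeff s f ≠ 0 → s ∈ U) (u : Fin n →₀ ℕ) (hu : u ∉ U)
    (hu1 : ∀ i, u + Finsupp.single i 1 ∈ U) (hreg : RegU k U (u.degree + 1)) :
    reg k (Fin n) I = u.degree + 1 := by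
  obtain ⟨F, hF⟩ := exists_res hreg I hI
  apply IsGreatest.csSup_eq
  constructor
  · refine ⟨n - 1, u.degree + n, ?_, by omega⟩
    have hne : { r | ∃ F : GradedFreeRes k (Fin n) I,
      r = (Finset.univ.filter (fun b => F.deg (n - 1) b = u.degree + n)).card }.Nonempty :=
      ⟨_, F, rfl⟩
    obtain ⟨F', hF'⟩ := Nat.sInf_mem hne
    obtain ⟨b, hb⟩ := lower_bound hn hI u hu hu1 F'
    unfold betti
    rw [hF']
    apply Finset.card_ne_zero_of_mem (a := b)
    simpa using hb
  · rintro r ⟨i, j, hb, rfl⟩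
    by_contra hlt
    apply hb
    have : 0 ∈ { r | ∃ F : GradedFreeRes k (Fin n) I,
      r = (Finset.univ.filter (fun b => F.deg i b = j)).card } := by
      refine ⟨F, ?_⟩
      symm
      rw [Finset.card_eq_zero, Finset.filter_eq_empty_iff]
      intro b _ h
      have := hF i b
      omega
    exact Nat.le_zero.1 (Nat.sInf_le this)

end LowerBound



section Combinatorics

/-- Membership in the colon ideal, with exponents indexed by natural numbers. -/
def Qn (n : ℕ) (w c b : ℕ → ℕ) : Prop :=
  ∃ c' : ℕ → ℕ, c' n = c' 0 ∧ ∑ i ∈ Finset.range n, c' i = ∑ i ∈ Finset.range n, c i ∧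
    (∃ p < n, c p < c' p ∧ ∀ i, p < i → i < n → c' i = c i) ∧
    ∀ i < n, w i * c' i + c' (i + 1) ≤ b i + (w i * c i + c (i + 1))

theorem Qn.swap {n : ℕ} {w c b : ℕ → ℕ} (hn : 3 ≤ n) (hw : ∀ i, 2 ≤ w i) (hc : c n = c 0)
    (l p : ℕ) (hl : 0 < c l) (hlp : l < p) (hp : p < n)
    (h1 : w p ≤ b p ∨ (w p ≤ b p + 1 ∧ p + 1 = n ∧ l = 0))
    (h2 : 1 ≤ b (p - 1) ∨ l + 1 = p) : Qn n w c b := by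
  let c' : ℕ → ℕ := fun i => if i = p then c i + 1 else if i = l ∨ (l = 0 ∧ i = n) then c i - 1
    else c i
  have hcp : c' p = c p + 1 := by simp [c']
  have hcl : ∀ i, i ≠ p → (i = l ∨ (l = 0 ∧ i = n)) → c' i = c i - 1 := by
    intro i h1 h2; simp only [c']; rw [if_neg h1, if_pos h2]
  have hco : ∀ i, i ≠ p → ¬ (i = l ∨ (l = 0 ∧ i = n)) → c' i = c i := by
    intro i h1 h2; simp only [c']; rw [if_neg h1, if_neg h2]
  refine ⟨c', ?_, ?_, ⟨p, hp, by omega, ?_⟩, ?_⟩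
  · by_cases h0 : l = 0
    · rw [hcl n (by omega) (by omega), hcl 0 (by omega) (by omega), hc]
    · rw [hco n (by omega) (by omega), hco 0 (by omega) (by omega), hc]
  · have key : ∑ i ∈ Finset.range n, (c' i + if i = l then 1 else 0) =
        ∑ i ∈ Finset.range n, (c i + if i = p then 1 else 0) := by
      refine Finset.sum_congr rfl fun i hi => ?_
      rw [Finset.mem_range] at hi
      by_cases hip : i = p
      · rw [if_neg (by omega), if_pos hip, hip, hcp]
      · by_cases hil : i = l
        · rw [if_pos hil, if_neg hip, hcl i hip (Or.inl hil), hil]; omega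
        · rw [if_neg hil, if_neg hip, hco i hip (by omega)]
    rw [Finset.sum_add_distrib, Finset.sum_add_distrib, Finset.sum_ite_eq', Finset.sum_ite_eq',
      if_pos (Finset.mem_range.2 (by omega)), if_pos (Finset.mem_range.2 hp)] at key
    omega
  · intro i hi hin
    exact hco i (by omega) (by omega)
  · intro i hi
    have hs : c' (i + 1) ≤ c (i + 1) + (if i + 1 = p then 1 else 0) := by
      split_ifs with h
      · rw [h, hcp]
      · by_cases h' : (i + 1 = l ∨ (l = 0 ∧ i + 1 = n))
        · rw [hcl _ h h']; omega
        · rw [hco _ h h']; omega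
    by_cases hip : i = p
    · subst hip
      rw [hcp, mul_add, mul_one]
      rw [if_neg (by omega)] at hs
      rcases h1 with h1 | ⟨h1, h3, h4⟩
      · omega
      · have : c' (i + 1) = c (i + 1) - 1 := hcl _ (by omega) (by omega)
        have h5 : 0 < c (i + 1) := by rw [h3, hc]; rw [h4] at hl; exact hl
        omega
    · by_cases hil : i = l
      · have h3 := hcl i hip (Or.inl hil)
        have h4 : w i * c' i + w i = w i * c i := by
          rw [h3, ← Nat.mul_succ]; congr 1; subst hil; omega
        have := hw i
        split_ifs at hs <;> omega
      · rw [hco i hip (by omega)]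
        split_ifs at hs with h
        · have : i = p - 1 := by omega
          rw [← this] at h2
          omega
        · omega

theorem qn_mono {n : ℕ} {w c b b' : ℕ → ℕ} (h : ∀ i < n, b i ≤ b' i) (hb : Qn n w c b) :
    Qn n w c b' := by
  obtain ⟨c', h1, h2, h3, h4⟩ := hb
  refine ⟨c', h1, h2, h3, fun i hi => ?_⟩
  have := h i hi
  have := h4 i hi
  omega

/-- The bounding exponents. -/
def qb (n : ℕ) (w c : ℕ → ℕ) (i : ℕ) : ℕ :=
  if ∑ l ∈ Finset.range i, c l = 0 then 0
  else if i + 1 = n ∧ 0 < c 0 ∧ c (n - 2) = 0 then w i - 1 else w i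

theorem qb_le (n : ℕ) (w c : ℕ → ℕ) (i : ℕ) : qb n w c i ≤ w i := by
  unfold qb
  split_ifs <;> omega

theorem qb_eq {n : ℕ} {w c : ℕ → ℕ} {i l : ℕ} (hl : 0 < c l) (hli : l < i)
    (h : i + 1 = n → c 0 = 0 ∨ 0 < c (n - 2)) : qb n w c i = w i := by
  unfold qb
  rw [if_neg, if_neg]
  · rintro ⟨h1, h2, h3⟩
    have := h h1
    omega
  · have := Finset.single_le_sum (f := c) (fun _ _ => Nat.zero_le _) (Finset.mem_range.2 hli)
    omega

theorem qb_ge {n : ℕ} {w c : ℕ → ℕ} {i l : ℕ} (hl : 0 < c l) (hli : l < i) :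
    w i ≤ qb n w c i + 1 := by
  unfold qb
  rw [if_neg]
  · split_ifs <;> omega
  · have := Finset.single_le_sum (f := c) (fun _ _ => Nat.zero_le _) (Finset.mem_range.2 hli)
    omega

theorem qb_zero {n : ℕ} {w c : ℕ → ℕ} {i : ℕ} (h : ∀ l < i, c l = 0) : qb n w c i = 0 := by
  unfold qb
  rw [if_pos]
  exact Finset.sum_eq_zero fun l hl => h l (Finset.mem_range.1 hl)

theorem ar1 {W d e : ℤ} (hW : 2 ≤ W) (hd : 1 ≤ d) (he : -d ≤ e) : W - 1 ≤ W * d + e := by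
  have := mul_nonneg (show 0 ≤ W - 1 by omega) (show 0 ≤ d - 1 by omega)
  linarith

theorem ar2 {W d e : ℤ} (hW : 2 ≤ W) (hd : 2 ≤ d) (he : -d ≤ e) : W ≤ W * d + e := by
  have := mul_nonneg (show 0 ≤ W - 1 by omega) (show 0 ≤ d - 2 by omega)
  linarith

theorem ar3 {W d e : ℤ} (hW : 2 ≤ W) (hd : 0 < d) (he : W * d + e < W) : e ≤ 1 - 2 * d := by
  have := mul_nonneg (show 0 ≤ W - 2 by omega) (show 0 ≤ d - 1 by omega)
  have h2 : e < 2 - 2 * d := by linarith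
  omega

theorem ar4 {W d e : ℤ} (hW : 2 ≤ W) (hd : d ≤ 0) (he : e ≤ 1) : W * d + e ≤ W := by
  have := mul_nonneg (show 0 ≤ W by omega) (show 0 ≤ -d by omega)
  linarith

theorem sum_neg_exists {m : ℕ} {δ : ℕ → ℤ} (h : ∑ i ∈ Finset.range m, δ i < 0) :
    ∃ l < m, δ l < 0 := by
  by_contra hno
  push Not at hno
  have := Finset.sum_nonneg (s := Finset.range m) (f := δ)
    fun i hi => hno i (Finset.mem_range.1 hi)
  omega

set_option maxHeartbeats 1000000 in
theorem Qn.inf {n : ℕ} {w c b : ℕ → ℕ} (hn : 3 ≤ n) (hw : ∀ i, 2 ≤ w i) (hc : c n = c 0)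
    (h : Qn n w c b) : Qn n w c (fun i => min (b i) (qb n w c i)) := by
  obtain ⟨c', hc', hsum, ⟨p, hpn, hlt, heq⟩, hle⟩ := id h
  let δ : ℕ → ℤ := fun i => (c' i : ℤ) - c i
  have hδ : ∀ i, δ i = (c' i : ℤ) - c i := fun i => rfl
  have hb : ∀ i < n, (w i : ℤ) * δ i + δ (i + 1) ≤ b i := by
    intro i hi
    have h1 := hle i hi
    zify at h1
    rw [hδ, hδ]
    linarith
  have hδp : 1 ≤ δ p := by rw [hδ]; omega
  have hδn : δ n = δ 0 := by rw [hδ, hδ, hc, hc']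
  have hcpos : ∀ l, δ l < 0 → 0 < c l := by
    intro l hl; rw [hδ] at hl; omega
  have hδ0 : ∀ i, p < i → i < n → δ i = 0 := by
    intro i h1 h2; rw [hδ, heq i h1 h2]; omega
  have hsn : ∑ i ∈ Finset.range n, δ i = 0 := by
    simp only [hδ]
    rw [Finset.sum_sub_distrib]
    have : ((∑ i ∈ Finset.range n, c' i : ℕ) : ℤ) = ((∑ i ∈ Finset.range n, c i : ℕ) : ℤ) := by
      rw [hsum]
    push_cast at this
    omega
  have hsp1 : ∑ i ∈ Finset.range (p + 1), δ i = 0 := by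
    rw [← hsn]
    refine Finset.sum_subset ?_ ?_
    · intro i hi; rw [Finset.mem_range] at hi ⊢; omega
    · intro i hi hi'
      rw [Finset.mem_range] at hi hi'
      exact hδ0 i (by omega) hi
  have hsp : ∑ i ∈ Finset.range p, δ i < 0 := by
    rw [Finset.sum_range_succ] at hsp1
    omega
  obtain ⟨l, hlp, hl⟩ := sum_neg_exists hsp
  have hcl := hcpos l hl
  have hwZ : ∀ i, (2 : ℤ) ≤ w i := fun i => by exact_mod_cast hw i
  have hmul : ∀ i, 1 ≤ δ i → (w i : ℤ) ≤ w i * δ i := by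
    intro i hi
    have := hwZ i
    nlinarith
  have hmul0 : ∀ i, 0 ≤ δ i → (0 : ℤ) ≤ w i * δ i := by
    intro i hi
    exact mul_nonneg (by omega) hi
  have swapq : ∀ l p : ℕ, 0 < c l → l < p → p < n →
    ((w p ≤ b p ∧ (p + 1 = n → c 0 = 0 ∨ 0 < c (n - 2))) ∨
      (w p ≤ b p + 1 ∧ p + 1 = n ∧ l = 0)) →
    ((1 ≤ b (p - 1) ∧ ∃ l, 0 < c l ∧ l < p - 1) ∨ l + 1 = p) →
    Qn n w c (fun i => min (b i) (qb n w c i)) := by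
    intro l p hl hlp hp h1 h2
    refine Qn.swap hn hw hc l p hl hlp hp ?_ ?_
    · rcases h1 with ⟨h1, h1'⟩ | ⟨h1, h1', h1''⟩
      · left; rw [qb_eq hl hlp h1']; omega
      · right
        have := qb_ge (n := n) (w := w) hl hlp
        refine ⟨?_, h1', h1''⟩
        omega
    · rcases h2 with ⟨h2, l', hl', hlp'⟩ | h2
      · left
        rw [qb_eq hl' hlp' (by omega)]
        have := hw (p - 1)
        omega
      · right; exact h2
  have hpp : p - 1 + 1 = p := by omega
  by_cases hp1 : p + 1 < n
  · -- case A
    have hbp := hb p hpn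
    rw [hδ0 (p + 1) (by omega) hp1] at hbp
    have := hmul p hδp
    by_cases hd : δ (p - 1) < 0
    · exact swapq (p - 1) p (hcpos _ hd) (by omega) hpn (Or.inl ⟨by omega, by omega⟩)
        (Or.inr hpp)
    · have hne : l ≠ p - 1 := by rintro rfl; exact hd hl
      have hb1 := hb (p - 1) (by omega)
      rw [hpp] at hb1
      have := hmul0 (p - 1) (by omega)
      exact swapq l p hcl hlp hpn (Or.inl ⟨by omega, by omega⟩)
        (Or.inl ⟨by omega, l, hcl, by omega⟩)
  · have hpe : p + 1 = n := by omega
    have hbp := hb p hpn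
    rw [hpe, hδn] at hbp
    have hwp := hmul p hδp
    have hn2 : n - 2 = p - 1 := by omega
    have hb1 := hb (p - 1) (by omega)
    rw [hpp] at hb1
    by_cases h0 : 0 ≤ δ 0
    · -- case B1
      by_cases hd : δ (p - 1) < 0
      · exact swapq (p - 1) p (hcpos _ hd) (by omega) hpn
          (Or.inl ⟨by omega, fun _ => Or.inr (by rw [hn2]; exact hcpos _ hd)⟩) (Or.inr hpp)
      · have hne : l ≠ p - 1 := by rintro rfl; exact hd hl
        have := hmul0 (p - 1) (by omega)
        by_cases hc0 : 0 < c 0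
        · exact swapq 0 p hc0 (by omega) hpn (Or.inr ⟨by omega, hpe, rfl⟩)
            (Or.inl ⟨by omega, 0, hc0, by omega⟩)
        · exact swapq l p hcl hlp hpn (Or.inl ⟨by omega, fun _ => Or.inl (by omega)⟩)
            (Or.inl ⟨by omega, l, hcl, by omega⟩)
    · -- case B2
      have hc0 := hcpos 0 (by omega)
      by_cases hex : ∃ j, 1 ≤ j ∧ j < p ∧ 0 < δ j ∧ (w j : ℤ) ≤ w j * δ j + δ (j + 1)
      · obtain ⟨j, hj1, hjp, hdj, hj⟩ := hex
        have hbj := hb j (by omega)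
        by_cases hd : δ (j - 1) < 0
        · exact swapq (j - 1) j (hcpos _ hd) (by omega) (by omega) (Or.inl ⟨by omega, by omega⟩)
            (Or.inr (by omega))
        · have hj0 : j - 1 ≠ 0 := by
            intro h; rw [h] at hd; exact hd (by omega)
          have hbj1 := hb (j - 1) (by omega)
          rw [show j - 1 + 1 = j by omega] at hbj1
          have := hmul0 (j - 1) (by omega)
          exact swapq 0 j hc0 (by omega) (by omega) (Or.inl ⟨by omega, by omega⟩)
            (Or.inl ⟨by omega, 0, hc0, by omega⟩)
      · push Not at hex
        have hex2 : ∀ j, 1 ≤ j → j < p → 0 < δ j → δ (j + 1) ≤ 1 - 2 * δ j := by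
          intro j h1 h2 h3
          have h4 := hex j h1 h2 h3
          exact ar3 (hwZ j) h3 h4
        have part : ∀ j, j < p → ∑ i ∈ Finset.range j, δ (i + 1) ≤ max (if j = 0 then 0 else δ j) 0 ∧
            ∀ j0, 1 ≤ j0 → j0 < j → 2 ≤ δ j0 →
              ∑ i ∈ Finset.range j, δ (i + 1) ≤ max (δ j) 0 - 1 := by
          intro j
          induction j with
          | zero => intro _; simp
          | succ j ih =>
            intro hj
            obtain ⟨i1, i2⟩ := ih (by omega)
            rw [Finset.sum_range_succ]
            have h2 := hex2 j
            constructor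
            · rw [if_neg (by omega)]
              split_ifs at i1 with hj0
              · omega
              · have := h2 (by omega) (by omega)
                omega
            · intro j0 hj0 hjj0 hd
              by_cases hjj : j0 = j
              · subst hjj
                rw [if_neg (by omega)] at i1
                have := h2 (by omega) (by omega) (by omega)
                omega
              · have i3 := i2 j0 hj0 (by omega) hd
                have := h2 (by omega) (by omega)
                omega
        have hlast : δ (p - 1) ≤ 0 := by
          by_contra hcon
          have := hex2 (p - 1) (by omega) (by omega) (by omega)
          rw [hpp] at this
          omega
        obtain ⟨pt1, pt2⟩ := part (p - 1) (by omega)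
        rw [if_neg (by omega)] at pt1
        rw [Finset.sum_range_succ', ← hpp, Finset.sum_range_succ, hpp] at hsp1
        by_cases hd : 0 ≤ δ (p - 1)
        · have := hmul0 (p - 1) hd
          have h7 : (w p : ℤ) - 1 ≤ w p * δ p + δ 0 := by
            exact ar1 (hwZ p) hδp (by omega)
          exact swapq 0 p hc0 (by omega) hpn (Or.inr ⟨by omega, hpe, rfl⟩)
            (Or.inl ⟨by omega, 0, hc0, by omega⟩)
        · have hcp1 : 0 < c (n - 2) := by rw [hn2]; exact hcpos _ (by omega)
          by_cases hbig : (w p : ℤ) ≤ w p * δ p + δ 0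
          · exact swapq (p - 1) p (hcpos _ (by omega)) (by omega) hpn
              (Or.inl ⟨by omega, fun _ => Or.inr hcp1⟩) (Or.inr hpp)
          · have h8 : -δ p ≤ δ 0 := by omega
            have h9 : δ p = 1 := by
              by_contra hne
              have h10 : 2 ≤ δ p := by omega
              exact hbig (ar2 (hwZ p) h10 h8)
            have h11 : δ 0 = -1 := by omega
            have hd1 : ∀ j, 1 ≤ j → j < n → δ j ≤ 1 := by
              intro j hj hjn
              by_contra hcon
              by_cases hjp : j < p - 1
              · have := pt2 j hj hjp (by omega)
                omega
              · have : j = p - 1 ∨ j = p := by omega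
                rcases this with rfl | rfl <;> omega
            refine ⟨c', hc', hsum, ⟨p, hpn, hlt, heq⟩, ?_⟩
            intro i hi
            have hbi := hle i hi
            suffices hq : (w i : ℤ) * δ i + δ (i + 1) ≤ qb n w c i by
              rw [hδ, hδ] at hq
              have hq' : (w i * c' i + c' (i + 1) : ℤ) ≤
                qb n w c i + (w i * c i + c (i + 1)) := by linarith
              have hq2 : w i * c' i + c' (i + 1) ≤ qb n w c i + (w i * c i + c (i + 1)) := by
                exact_mod_cast hq'
              change _ ≤ min (b i) (qb n w c i) + _
              omega
            by_cases hi0 : i = 0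
            · subst hi0
              rw [h11]
              have := hd1 1 le_rfl (by omega)
              have := hwZ 0
              rw [zero_add]
              omega
            · have hqi : qb n w c i = w i := qb_eq hc0 (by omega) fun _ => Or.inr hcp1
              rw [hqi]
              by_cases hip : i = p
              · rw [hip, hpe, hδn, h11, h9]; omega
              · by_cases hdi : 0 < δ i
                · exact (hex i (by omega) (by omega) hdi).le
                · have := hd1 (i + 1) (by omega) (by omega)
                  exact ar4 (hwZ i) (by omega) this

theorem Qn.deg_bound {n : ℕ} {w c b : ℕ → ℕ} (hn : 3 ≤ n) (hw : ∀ i, 2 ≤ w i) (hc : c n = c 0)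
    (h : ¬ Qn n w c b) (hq : ∀ i < n, b i ≤ qb n w c i) (f : ℕ) (hf : f < n) (hcf : 0 < c f)
    (hf0 : ∀ i < f, c i = 0) :
    ∑ i ∈ Finset.range n, b i + w f ≤ ∑ i ∈ Finset.range n, (w i - 1) := by
  have hz : ∀ i, i ≤ f → b i = 0 := by
    intro i hi
    have := hq i (by omega)
    rw [qb_zero (fun l hl => hf0 l (by omega))] at this
    omega
  have hbw : ∀ i < n, b i ≤ w i := fun i hi => (hq i hi).trans (qb_le _ _ _ _)
  have hcase : ∀ i, f < i → i < n → b i = w i → b (i - 1) = 0 ∧ f < i - 1 := by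
    intro i hfi hin hbi
    have h1 : c (i - 1) = 0 := by
      by_contra hne
      exact h (Qn.swap hn hw hc (i - 1) i (by omega) (by omega) hin (Or.inl hbi.ge)
        (Or.inr (by omega)))
    have h2 : f < i - 1 := by
      by_contra hne
      have : f = i - 1 := by omega
      rw [← this] at h1; omega
    refine ⟨?_, h2⟩
    by_contra hne
    exact h (Qn.swap hn hw hc f i hcf hfi hin (Or.inl hbi.ge) (Or.inl (by omega)))
  have base : f ≤ ∑ i ∈ Finset.range f, (w i - 1) := by
    calc f = ∑ i ∈ Finset.range f, 1 := by simp
      _ ≤ _ := Finset.sum_le_sum fun i _ => by have := hw i; omega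
  have part : ∀ d, f + d < n →
      (∑ i ∈ Finset.range (f + d + 1), b i + (w f - 1) + f ≤
        ∑ i ∈ Finset.range (f + d + 1), (w i - 1)) ∧
      (0 < d → b (f + d) = 0 → ∑ i ∈ Finset.range (f + d + 1), b i + (w f - 1) + f + 1 ≤
        ∑ i ∈ Finset.range (f + d + 1), (w i - 1)) := by
    intro d
    induction d with
    | zero =>
      intro _
      refine ⟨?_, by omega⟩
      rw [add_zero, Finset.sum_eq_zero (fun i hi => hz i (by
        rw [Finset.mem_range] at hi; omega)), Finset.sum_range_succ]
      omega
    | succ d ih =>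
      intro hd
      obtain ⟨i1, i2⟩ := ih (by omega)
      rw [← add_assoc, Finset.sum_range_succ, Finset.sum_range_succ (fun i => w i - 1)]
      have h1 := hbw (f + d + 1) (by omega)
      have h2 := hw (f + d + 1)
      constructor
      · by_cases hb : b (f + d + 1) = w (f + d + 1)
        · obtain ⟨h3, h4⟩ := hcase (f + d + 1) (by omega) (by omega) hb
          have := i2 (by omega) h3
          omega
        · omega
      · intro _ h3
        omega
  by_cases hf00 : f = 0
  · subst hf00
    obtain ⟨i1, i2⟩ := part (n - 2) (by omega)
    rw [zero_add] at i1 i2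
    have hns : n - 2 + 1 = n - 1 := by omega
    have hns' : n - 1 + 1 = n := by omega
    rw [hns] at i1 i2
    have hlast : b (n - 1) + 1 ≤ w (n - 1) := by
      have h1 := hbw (n - 1) (by omega)
      by_contra hcon
      have h2 : b (n - 1) = w (n - 1) := by omega
      have h3 := hq (n - 1) (by omega)
      by_cases h4 : c (n - 2) = 0
      · unfold qb at h3
        have := hw (n - 1)
        split_ifs at h3 <;> omega
      · exact h (Qn.swap hn hw hc (n - 2) (n - 1) (by omega) (by omega) (by omega)
          (Or.inl h2.ge) (Or.inr (by omega)))
    have hor : b (n - 1) + 2 ≤ w (n - 1) ∨ b (n - 2) = 0 := by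
      by_contra hcon
      push Not at hcon
      exact h (Qn.swap hn hw hc 0 (n - 1) hcf (by omega) (by omega)
          (Or.inr ⟨by omega, by omega, rfl⟩) (Or.inl (by
            rw [show n - 1 - 1 = n - 2 by omega]; omega)))
    rw [← hns', Finset.sum_range_succ, Finset.sum_range_succ (fun i => w i - 1)]
    have := hw 0
    rcases hor with h1 | h1
    · omega
    · have := i2 (by omega) h1
      omega
  · obtain ⟨i1, -⟩ := part (n - 1 - f) (by omega)
    rw [show f + (n - 1 - f) + 1 = n by omega] at i1
    have := hw f
    omega

end Combinatorics



section Cycle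

variable {k : Type} [Field k] {n : ℕ} [NeZero n]

/-- The exponent of the product of generators with multiplicities `c`. -/
def Ee (w c : Fin n → ℕ) : Fin n →₀ ℕ := ∑ i, c i • cycE n w i

theorem cycE_apply (w : Fin n → ℕ) (i j : Fin n) :
    cycE n w i j = (if j + 1 = i then 1 else 0) + (if i = j then w j else 0) := by
  rw [cycE, Finsupp.add_apply, Finsupp.single_apply, Finsupp.single_apply]
  congr 1
  · simp only [sub_eq_iff_eq_add, eq_comm (a := i)]
  · split_ifs with h
    · rw [h]
    · rfl

theorem Ee_apply (w c : Fin n → ℕ) (j : Fin n) : Ee w c j = w j * c j + c (j + 1) := by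
  rw [Ee, Finsupp.finsetSum_apply]
  simp only [Finsupp.smul_apply, cycE_apply, smul_eq_mul, mul_add, Finset.sum_add_distrib, mul_ite,
    mul_one, mul_zero, Finset.sum_ite_eq, Finset.sum_ite_eq', Finset.mem_univ, if_true]
  ring

theorem Ee_add (w c c' : Fin n → ℕ) : Ee w (c + c') = Ee w c + Ee w c' := by
  simp only [Ee, Pi.add_apply, add_smul, Finset.sum_add_distrib]

theorem Ee_single (w : Fin n → ℕ) (i : Fin n) : Ee w (Pi.single i 1) = cycE n w i := by
  rw [Ee, Finset.sum_eq_single i]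
  · simp
  · intro b _ hb; simp [hb]
  · simp

/-- The exponents of monomials in the `t`-th power of the edge ideal. -/
def Gt (w : Fin n → ℕ) (t : ℕ) : Set (Fin n →₀ ℕ) := {a | ∃ c, ∑ i, c i = t ∧ Ee w c ≤ a}

theorem cycIdeal_pow (w : Fin n → ℕ) (t : ℕ) :
    cycIdeal k n w ^ t =
      Ideal.span ((fun s => monomial s (1 : k)) '' {a | ∃ c, ∑ i, c i = t ∧ Ee w c = a}) := by
  induction t with
  | zero =>
    rw [pow_zero, Ideal.one_eq_top]
    symm
    rw [Ideal.eq_top_iff_one]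
    refine Ideal.subset_span ⟨0, ⟨0, by simp, by simp [Ee]⟩, by simp⟩
  | succ t ih =>
    rw [pow_succ, ih, cycIdeal, Ideal.span_mul_span']
    congr 1
    ext p
    constructor
    · rintro ⟨_, ⟨_, ⟨c, hc, rfl⟩, rfl⟩, _, ⟨i, rfl⟩, rfl⟩
      refine ⟨Ee w (c + Pi.single i 1), ⟨_, ?_, rfl⟩, ?_⟩
      · simp [Finset.sum_add_distrib, hc]
      · simp only [cycL]
        rw [monomial_mul, one_mul, Ee_add, Ee_single]
    · rintro ⟨_, ⟨c, hc, rfl⟩, rfl⟩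
      obtain ⟨i, hi⟩ : ∃ i, c i ≠ 0 := by
        by_contra hno
        push Not at hno
        simp [hno] at hc
      have hcc : c = (c - Pi.single i 1) + Pi.single i 1 := by
        funext j
        by_cases h : j = i
        · subst h; simp; omega
        · simp [h]
      refine ⟨_, ⟨_, ⟨c - Pi.single i 1, ?_, rfl⟩, rfl⟩, _, ⟨i, rfl⟩, ?_⟩
      · rw [hcc] at hc
        simp only [Pi.add_apply, Finset.sum_add_distrib] at hc
        simp at hc
        simpa using hc
      · simp only [cycL]
        rw [monomial_mul, one_mul, ← Ee_single, ← Ee_add, ← hcc]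

theorem mem_cycIdeal_pow (w : Fin n → ℕ) (t : ℕ) (f : MvPolynomial (Fin n) k) :
    f ∈ cycIdeal k n w ^ t ↔ ∀ s, coeff s f ≠ 0 → s ∈ Gt w t := by
  rw [cycIdeal_pow, mem_ideal_span_monomial_image]
  simp only [mem_support_iff]
  refine forall_congr' fun s => imp_congr_right fun _ => ?_
  constructor
  · rintro ⟨_, ⟨c, hc, rfl⟩, h⟩; exact ⟨c, hc, h⟩
  · rintro ⟨c, hc, h⟩; exact ⟨_, ⟨c, hc, rfl⟩, h⟩

/-- Periodic extension. -/
def ex (f : Fin n → ℕ) (i : ℕ) : ℕ := f (Fin.ofNat n i)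

theorem ex_val (f : Fin n → ℕ) (i : Fin n) : ex f i.val = f i := by
  unfold ex
  congr 1
  ext
  simp [Fin.ofNat, Nat.mod_eq_of_lt i.2]

theorem ex_n (f : Fin n → ℕ) : ex f n = ex f 0 := by
  unfold ex
  congr 1
  ext
  simp [Fin.ofNat]

theorem per_succ (hn : 3 ≤ n) {g : ℕ → ℕ} (hg : g n = g 0) (i : Fin n) :
    g ((i + 1 : Fin n).val) = g (i.val + 1) := by
  have h1 : (1 : Fin n).val = 1 := by
    rw [Fin.val_one', Nat.mod_eq_of_lt (by omega)]
  rw [Fin.val_add, h1]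
  by_cases h : i.val + 1 = n
  · rw [h, Nat.mod_self, hg]
  · rw [Nat.mod_eq_of_lt (by omega)]

theorem ex_succ (hn : 3 ≤ n) (f : Fin n → ℕ) (i : Fin n) : ex f (i.val + 1) = f (i + 1) := by
  rw [← per_succ hn (ex_n f), ex_val]

theorem sum_ex (f : Fin n → ℕ) : ∑ i ∈ Finset.range n, ex f i = ∑ i, f i := by
  rw [← Fin.sum_univ_eq_sum_range]
  exact Finset.sum_congr rfl fun i _ => ex_val f i

theorem colex_lt_iff (c c' : Fin n → ℕ) :
    toColex c < toColex c' ↔ ∃ p, (∀ j, p < j → c j = c' j) ∧ c p < c' p := Iff.rfl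

theorem qn_iff (hn : 3 ≤ n) (w c : Fin n → ℕ) (b : Fin n →₀ ℕ) :
    Qn n (ex w) (ex c) (ex b) ↔
      ∃ c' : Fin n → ℕ, ∑ i, c' i = ∑ i, c i ∧ toColex c < toColex c' ∧ Ee w c' ≤ b + Ee w c := by
  constructor
  · rintro ⟨c', h1, h2, ⟨p, hp, h3, h4⟩, h5⟩
    refine ⟨fun i => c' i.val, ?_, ?_, ?_⟩
    · rw [← sum_ex c, ← h2, Fin.sum_univ_eq_sum_range]
    · rw [colex_lt_iff]
      refine ⟨⟨p, hp⟩, ?_, ?_⟩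
      · intro j hj
        rw [← ex_val c j, h4 j.val hj j.2]
      · rw [← ex_val c]; exact h3
    · intro i
      have := h5 i.val i.2
      rw [Finsupp.add_apply, Ee_apply, Ee_apply]
      rw [per_succ hn h1]
      rwa [ex_succ hn, ex_val, ex_val, ex_val] at this
  · rintro ⟨c', h1, h2, h3⟩
    obtain ⟨p, h4, h5⟩ := (colex_lt_iff _ _).1 h2
    refine ⟨ex c', ex_n _, by rw [sum_ex, sum_ex, h1], ⟨p.val, p.2, by rwa [ex_val, ex_val], ?_⟩, ?_⟩
    · intro i hpi hi
      have := h4 ⟨i, hi⟩ hpi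
      rw [← ex_val c, ← ex_val c'] at this
      exact this.symm
    · intro i hi
      have := h3 ⟨i, hi⟩
      rw [Finsupp.add_apply, Ee_apply, Ee_apply, ← ex_succ hn c', ← ex_succ hn c, ← ex_val w,
        ← ex_val c, ← ex_val c', ← ex_val (⇑b)] at this
      exact this

theorem degree_eq_sum' (a : Fin n →₀ ℕ) : a.degree = ∑ i, a i := by
  rw [Finsupp.degree_eq_sum]

theorem degree_Ee (w c : Fin n → ℕ) : (Ee w c).degree = ∑ i, c i * (w i + 1) := by
  rw [Ee, map_sum]
  refine Finset.sum_congr rfl fun i _ => ?_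
  rw [map_nsmul, cycE, map_add, Finsupp.degree_single, Finsupp.degree_single, smul_eq_mul]
  ring

theorem degree_Ee_le (w c : Fin n → ℕ) (f : Fin n) (hf : 0 < c f) (W : ℕ) (hW : ∀ i, w i ≤ W) :
    (Ee w c).degree ≤ (w f + 1) + (∑ i, c i - 1) * (W + 1) := by
  have key : ∑ i, (c i * (w i + 1) + if i = f then W + 1 else 0) ≤
      ∑ i, (c i * (W + 1) + if i = f then w f + 1 else 0) := by
    refine Finset.sum_le_sum fun i _ => ?_
    split_ifs with h
    · subst h
      obtain ⟨d, hd⟩ : ∃ d, c i = d + 1 := ⟨c i - 1, by omega⟩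
      rw [hd]
      have := Nat.mul_le_mul_left d (Nat.add_le_add_right (hW i) 1)
      rw [add_mul, add_mul]
      omega
    · exact Nat.add_le_add_right (Nat.mul_le_mul_left _ (Nat.add_le_add_right (hW i) 1)) 0
  rw [Finset.sum_add_distrib, Finset.sum_add_distrib, Finset.sum_ite_eq', Finset.sum_ite_eq',
    if_pos (Finset.mem_univ _), if_pos (Finset.mem_univ _), ← degree_Ee, ← Finset.sum_mul] at key
  have hpos : 1 ≤ ∑ i, c i :=
    hf.trans_le (Finset.single_le_sum (f := c) (fun _ _ => Nat.zero_le _) (Finset.mem_univ f))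
  obtain ⟨d, hd⟩ : ∃ d, ∑ i, c i = d + 1 := ⟨∑ i, c i - 1, by omega⟩
  rw [hd, add_mul] at key
  rw [hd, Nat.add_sub_cancel]
  omega

theorem regU_colon (hn : 3 ≤ n) (w : Fin n → ℕ) (hw : ∀ i, 2 ≤ w i) (c : Fin n → ℕ) (f : Fin n)
    (hf : 0 < c f) (hf0 : ∀ i < f, c i = 0) :
    RegU k {b : Fin n →₀ ℕ | ∃ c' : Fin n → ℕ, ∑ i, c' i = ∑ i, c i ∧ toColex c < toColex c' ∧
      Ee w c' ≤ b + Ee w c} (∑ i, (w i - 1) - w f + 1) := by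
  let q : Fin n →₀ ℕ := Finsupp.equivFunOnFinite.symm fun i => qb n (ex w) (ex c) i.val
  have hq : ∀ i, q i = qb n (ex w) (ex c) i.val := fun i => rfl
  have hw' : ∀ i, 2 ≤ ex w i := fun i => hw _
  refine regU_coarse _ q rfl _ ?_ ?_ _ ?_
  · rintro a b hab ⟨c', h1, h2, h3⟩
    exact ⟨c', h1, h2, h3.trans (add_le_add_left hab _)⟩
  · intro a ha
    have h1 := ((qn_iff hn w c a).2 ha).inf hn hw' (ex_n c)
    refine (qn_iff hn w c _).1 (qn_mono ?_ h1)
    intro i hi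
    have h2 := ex_val (⇑(a ⊓ q)) ⟨i, hi⟩
    have h3 := ex_val (⇑a) ⟨i, hi⟩
    simp only at h2 h3
    rw [h2, h3, Finsupp.inf_apply, hq]
  · intro a ha haq
    have h1 : ¬ Qn n (ex w) (ex c) (ex a) := fun h => ha ((qn_iff hn w c a).1 h)
    have h2 := Qn.deg_bound hn hw' (ex_n c) h1 ?_ f.val f.2 (by rwa [ex_val]) ?_
    · rw [sum_ex, ex_val] at h2
      have h3 : ∑ i ∈ Finset.range n, (ex w i - 1) = ∑ i, (w i - 1) := sum_ex fun i => w i - 1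
      rw [degree_eq_sum']
      omega
    · intro i hi
      have := haq ⟨i, hi⟩
      rw [hq, ← ex_val (⇑a)] at this
      exact this
    · intro i hi
      have := hf0 ⟨i, hi.trans f.2⟩ hi
      rwa [← ex_val c] at this

theorem regU_Gt (hn : 3 ≤ n) (w : Fin n → ℕ) (hw : ∀ i, 2 ≤ w i) (t : ℕ) (ht : 1 ≤ t) (W : ℕ)
    (hW : ∀ i, w i ≤ W) : RegU k (Gt w t) (∑ i, (w i - 1) + (t - 1) * (W + 1) + 1) := by
  classical
  set R := ∑ i, (w i - 1) + (t - 1) * (W + 1) + 1 with hR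
  have main : ∀ s : Finset (Colex (Fin n → ℕ)),
      ((∀ x ∈ s, ∑ i, ofColex x i = t) ∧
        ∀ x ∈ s, ∀ y : Colex (Fin n → ℕ), ∑ i, ofColex y i = t → x < y → y ∈ s) →
      RegU k {a : Fin n →₀ ℕ | ∃ c ∈ s, Ee w (ofColex c) ≤ a} R := by
    intro s
    induction s using Finset.induction_on_min with
    | empty =>
      intro _
      have : {a : Fin n →₀ ℕ | ∃ c ∈ (∅ : Finset (Colex (Fin n → ℕ))), Ee w (ofColex c) ≤ a} = ∅ := by
        ext a; simp
      rw [this]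
      exact regU_empty _
    | insert c0 s hlt ih =>
      rintro ⟨hs1, hs2⟩
      let c : Fin n → ℕ := ofColex c0
      have hct : ∑ i, c i = t := hs1 c0 (Finset.mem_insert_self _ _)
      have ih' := ih ⟨fun x hx => hs1 x (Finset.mem_insert_of_mem hx), fun x hx y hy hxy => by
        rcases Finset.mem_insert.1 (hs2 x (Finset.mem_insert_of_mem hx) y hy hxy) with h | h
        · exact absurd (hlt x hx) (by rw [← h]; exact hxy.not_gt)
        · exact h⟩
      have hs : ∀ y : Colex (Fin n → ℕ), y ∈ s ↔ ∑ i, ofColex y i = t ∧ c0 < y := by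
        intro y
        constructor
        · intro hy; exact ⟨hs1 y (Finset.mem_insert_of_mem hy), hlt y hy⟩
        · rintro ⟨h1, h2⟩
          rcases Finset.mem_insert.1 (hs2 c0 (Finset.mem_insert_self _ _) y h1 h2) with h | h
          · rw [h] at h2; exact absurd h2 (lt_irrefl _)
          · exact h
      obtain ⟨f, hf, hf0⟩ : ∃ f, 0 < c f ∧ ∀ i < f, c i = 0 := by
        have hne : ∃ m : ℕ, ∃ h : m < n, 0 < c ⟨m, h⟩ := by
          by_contra hno
          push Not at hno
          have : ∑ i, c i = 0 := Finset.sum_eq_zero fun i _ => by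
            have := hno i.val i.2
            simpa using this
          omega
        obtain ⟨h1, h2⟩ := Nat.find_spec hne
        refine ⟨⟨Nat.find hne, h1⟩, h2, fun i hi => ?_⟩
        by_contra hcon
        exact Nat.find_min hne hi ⟨i.2, Nat.pos_of_ne_zero hcon⟩
      have hdeg := degree_Ee_le w c f hf W hW
      rw [hct] at hdeg
      have hfle : w f ≤ ∑ i, (w i - 1) := by
        rw [← Finset.add_sum_erase _ _ (Finset.mem_univ f)]
        have h1 : (Finset.univ.erase f).card ≤ ∑ i ∈ Finset.univ.erase f, (w i - 1) := by
          rw [Finset.card_eq_sum_ones]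
          exact Finset.sum_le_sum fun i _ => by have := hw i; omega
        rw [Finset.card_erase_of_mem (Finset.mem_univ _), Finset.card_univ, Fintype.card_fin] at h1
        omega
      have hun : {a : Fin n →₀ ℕ | ∃ c ∈ insert c0 s, Ee w (ofColex c) ≤ a} =
          {a : Fin n →₀ ℕ | ∃ c ∈ s, Ee w (ofColex c) ≤ a} ∪
            {a | Ee w c ≤ a ∧ a - Ee w c ∈ (Set.univ : Set (Fin n →₀ ℕ))} := by
        ext a
        constructor
        · rintro ⟨c', hc', h⟩
          rcases Finset.mem_insert.1 hc' with h1 | h1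
          · right; rw [h1] at h; exact ⟨h, trivial⟩
          · left; exact ⟨c', h1, h⟩
        · rintro (⟨c', hc', h⟩ | ⟨h, -⟩)
          · exact ⟨c', Finset.mem_insert_of_mem hc', h⟩
          · exact ⟨c0, Finset.mem_insert_self _ _, h⟩
      have hcap : {a : Fin n →₀ ℕ | ∃ c ∈ s, Ee w (ofColex c) ≤ a} ∩
            {a | Ee w c ≤ a ∧ a - Ee w c ∈ (Set.univ : Set (Fin n →₀ ℕ))} =
          {a | Ee w c ≤ a ∧ a - Ee w c ∈ {b : Fin n →₀ ℕ | ∃ c' : Fin n → ℕ,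
            ∑ i, c' i = ∑ i, c i ∧ toColex c < toColex c' ∧ Ee w c' ≤ b + Ee w c}} := by
        ext a
        constructor
        · rintro ⟨⟨c', hc', h⟩, h1, -⟩
          obtain ⟨h2, h3⟩ := (hs c').1 hc'
          refine ⟨h1, ofColex c', h2.trans hct.symm, h3, ?_⟩
          rwa [tsub_add_cancel_of_le h1]
        · rintro ⟨h1, c', h2, h3, h4⟩
          rw [tsub_add_cancel_of_le h1] at h4
          exact ⟨⟨toColex c', (hs _).2 ⟨h2.trans hct, h3⟩, h4⟩, h1, trivial⟩
      rw [hun]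
      refine ih'.union ?_ ?_
      · exact ((regU_univ 0).shift (Ee w c)).mono (by omega)
      · rw [hcap]
        exact ((regU_colon hn w hw c f hf hf0).shift (Ee w c)).mono (by omega)
  have hfin : Set.Finite {x : Colex (Fin n → ℕ) | ∑ i, ofColex x i = t} := by
    have h1 : Set.Finite {x : Fin n → ℕ | ∑ i, x i = t} := by
      refine (Set.finite_Iic (fun _ : Fin n => t)).subset ?_
      intro x hx i
      have hx' : ∑ i, x i = t := hx
      rw [← hx']
      exact Finset.single_le_sum (f := x) (fun _ _ => Nat.zero_le _) (Finset.mem_univ i)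
    exact h1
  have := main hfin.toFinset ⟨fun x hx => by simpa using hx, fun x hx y hy _ => by simpa using hy⟩
  convert this using 1
  ext a
  constructor
  · rintro ⟨c, hc, h⟩
    exact ⟨toColex c, by simpa using hc, h⟩
  · rintro ⟨c, hc, h⟩
    exact ⟨ofColex c, by simpa using hc, h⟩

/-- The socle exponent. -/
def so (w : Fin n → ℕ) (m : Fin n) (t : ℕ) : Fin n →₀ ℕ :=
  Finsupp.equivFunOnFinite.symm (fun i => w i - 1) + (t - 1) • cycE n w m

theorem so_apply (w : Fin n → ℕ) (m : Fin n) (t : ℕ) (i : Fin n) :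
    so w m t i = w i - 1 + (t - 1) * cycE n w m i := rfl

theorem so_degree (w : Fin n → ℕ) (m : Fin n) (t : ℕ) :
    (so w m t).degree = ∑ i, (w i - 1) + (t - 1) * (w m + 1) := by
  rw [so, map_add, map_nsmul, degree_eq_sum', cycE, map_add, Finsupp.degree_single,
    Finsupp.degree_single, smul_eq_mul, add_comm 1]
  rfl

theorem succ_ne (hn : 3 ≤ n) (i : Fin n) : i + 1 ≠ i := by
  intro h
  have h1 : (1 : Fin n) = 0 := by simpa using h
  have h2 := congrArg Fin.val h1
  rw [Fin.val_one', Nat.mod_eq_of_lt (by omega)] at h2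
  simp at h2

theorem so_succ_mem (hn : 3 ≤ n) (w : Fin n → ℕ) (hw : ∀ i, 2 ≤ w i) (m : Fin n) (t : ℕ)
    (ht : 1 ≤ t) (i : Fin n) : so w m t + Finsupp.single i 1 ∈ Gt w t := by
  have hE : ∀ d : ℕ, Ee w (Pi.single m d) = d • cycE n w m := by
    intro d
    rw [Ee, Finset.sum_eq_single m]
    · simp
    · intro b _ hb; simp [hb]
    · simp
  refine ⟨Pi.single i 1 + Pi.single m (t - 1), ?_, ?_⟩
  · simp only [Pi.add_apply, Finset.sum_add_distrib]
    simp; omega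
  · rw [Ee_add, Ee_single, hE, so, add_right_comm]
    refine add_le_add_left ?_ _
    intro j
    rw [cycE_apply, Finsupp.add_apply, Finsupp.single_apply]
    have h1 := hw j
    have h2 := succ_ne hn j
    change _ ≤ w j - 1 + _
    by_cases hij : i = j
    · rw [if_pos hij, if_pos hij, if_neg (by rw [hij]; exact h2)]; omega
    · rw [if_neg hij, if_neg hij]
      split_ifs <;> omega

theorem so_not_mem (hn : 3 ≤ n) (w : Fin n → ℕ) (hw : ∀ i, 2 ≤ w i) (m : Fin n) (t : ℕ)
    (ht : 1 ≤ t) : so w m t ∉ Gt w t := by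
  rintro ⟨c, hc, hle⟩
  have hle' : ∀ j, w j * c j + c (j + 1) ≤ w j - 1 + (t - 1) * cycE n w m j := by
    intro j; rw [← Ee_apply]; exact hle j
  obtain ⟨d, rfl⟩ : ∃ d, t = d + 1 := ⟨t - 1, by omega⟩
  rw [Nat.add_sub_cancel] at hle'
  have hne : m - 1 ≠ m := by
    intro h; apply succ_ne hn m; conv_lhs => rw [← h]
    rw [sub_add_cancel]
  have h0 : ∀ j, j ≠ m → j ≠ m - 1 → c j = 0 := by
    intro j h1 h2
    have h3 := hle' j
    rw [cycE_apply, if_neg (fun h => h2 (eq_sub_of_add_eq h)), if_neg (Ne.symm h1)] at h3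
    by_contra hcon
    have := Nat.le_mul_of_pos_right (w j) (Nat.pos_of_ne_zero hcon)
    have := hw j
    omega
  have hsum : c m + c (m - 1) = d + 1 := by
    rw [← hc, ← Finset.add_sum_erase _ _ (Finset.mem_univ m),
      ← Finset.add_sum_erase _ _ (Finset.mem_erase.2 ⟨hne, Finset.mem_univ (m - 1)⟩),
      Finset.sum_eq_zero (s := (Finset.univ.erase m).erase (m - 1))]
    · rw [add_zero]
    · intro j hj
      rw [Finset.mem_erase, Finset.mem_erase] at hj
      exact h0 j hj.2.1 hj.1
  have hm := hle' m
  have hm1 := hle' (m - 1)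
  rw [cycE_apply, if_neg (succ_ne hn m), if_pos rfl, zero_add] at hm
  rw [cycE_apply, sub_add_cancel, if_pos rfl, if_neg hne.symm, add_zero, mul_one] at hm1
  have hw1 := hw m
  have hw2 := hw (m - 1)
  have hcm : c m ≤ d := by
    by_contra hcon
    have h1 : w m * (d + 1) ≤ w m * c m := Nat.mul_le_mul_left _ (by omega)
    rw [mul_add, mul_comm (w m) d] at h1
    omega
  have h1 : 1 ≤ c (m - 1) := by omega
  obtain ⟨e, he⟩ : ∃ e, c (m - 1) = e + 1 := ⟨c (m - 1) - 1, by omega⟩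
  have h2 : 2 * e ≤ w (m - 1) * e := Nat.mul_le_mul_right _ hw2
  rw [he, mul_add] at hm1
  omega

theorem reg_pow (hn : 3 ≤ n) (w : Fin n → ℕ) (hw : ∀ i, 2 ≤ w i) (t : ℕ) (ht : 1 ≤ t) :
    reg k (Fin n) (cycIdeal k n w ^ t) =
      ∑ i, (w i - 1) + (t - 1) * (Finset.univ.sup w + 1) + 1 := by
  obtain ⟨m, -, hm⟩ := Finset.exists_mem_eq_sup Finset.univ ⟨0, Finset.mem_univ _⟩ w
  have h := reg_eq (by omega) (mem_cycIdeal_pow (k := k) w t) (so w m t) (so_not_mem hn w hw m t ht)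
    (so_succ_mem hn w hw m t ht) (by
      rw [so_degree]
      refine regU_Gt hn w hw t ht (w m) fun i => ?_
      rw [← hm]
      exact Finset.le_sup (Finset.mem_univ i))
  rw [h, so_degree, hm]

end Cycle


/-- for the vertex-weighted oriented `n`-cycle with all weights at
least `2`, `reg (I(C_n)^t) = reg (I(C_n)) + (t-1)(w+1)` for all `t ≥ 1`, where `w`
is the largest weight. -/
theorem reg_power_cycle_eq_reg_add
    (hn : 3 ≤ n) (w : Fin n → ℕ) (hw : ∀ i, 2 ≤ w i) (t : ℕ) (ht : 1 ≤ t) :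
    reg k (Fin n) ((cycIdeal k n w) ^ t) =
      reg k (Fin n) (cycIdeal k n w) + (t - 1) * (Finset.univ.sup w + 1) := by
  have h1 := reg_pow (k := k) hn w hw 1 le_rfl
  rw [pow_one] at h1
  rw [reg_pow hn w hw t ht, h1]
  simp only [Nat.sub_self, Nat.zero_mul]
  omega

end PaperReg
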